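/- arXiv:1111.6782 — 2 statements merged into one kernel-verified Lean document; each statement's English description precedes it below -/
import Mathlib

section
/- Let α ∈ (2,3), n ≥ 2, let γ ∈ H^{(1+α)/2,2}(ℝ/ℤ,ℝⁿ) be injective and regular, and let h ∈ H^{(1+α)/2,2}(ℝ/ℤ,ℝⁿ). Then δE^α(γ;h) = lim_{ε↘0} ∬_{U_ε} { 2·(1/|γ(u+w)−γ(u)|^α − 1/d_γ(u+w,u)^α)·⟨γ'(u)/|γ'(u)|², h'(u)⟩ − α·( ⟨γ(u+w)−γ(u), h(u+w)−h(u)⟩/|γ(u+w)−γ(u)|^{α+2} − (d/dτ)|_{τ=0} d_{γ+τh}(u+w,u) / d_γ(u+w,u)^{α+1} ) } · |γ'(u+w)|·|γ'(u)| dw du; in particular the limit on the right-hand side exists. -/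
open MeasureTheory Filter Set
open scoped RealInnerProductSpace ENNReal Topology

noncomputable section

/-- `ℝⁿ` -/
abbrev Rn (n : ℕ) := EuclideanSpace ℝ (Fin n)

variable {n : ℕ}

/-- A 1-periodic curve is injective as a map on `ℝ/ℤ`. -/
def PerInjective (γ : ℝ → Rn n) : Prop :=
  ∀ u v : ℝ, γ u = γ v → ∃ k : ℤ, v = u + k

/-- `γ` is a regular curve: `γ'(u) ≠ 0` for all `u`. -/
def RegularCurve (γ : ℝ → Rn n) : Prop := ∀ u : ℝ, deriv γ u ≠ 0

/-- `γ` is parametrized by arc-length: `|γ'(u)| = 1` for all `u`. -/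
def ArcLengthParam (γ : ℝ → Rn n) : Prop := ∀ u : ℝ, ‖deriv γ u‖ = 1

/-- The length `L(γ) = ∫₀¹ |γ'(θ)| dθ` of the closed curve `γ`. -/
def curveLen (γ : ℝ → Rn n) : ℝ := ∫ θ in (0:ℝ)..1, ‖deriv γ θ‖

/-- The arc length `L(γ|_{[u,u+w]}) = |∫_u^{u+w} |γ'(θ)| dθ|`. -/
def arcLen (γ : ℝ → Rn n) (u w : ℝ) : ℝ := |∫ θ in u..(u + w), ‖deriv γ θ‖|

/-- The intrinsic distance `d_γ(u+w,u)`. -/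
def idist (γ : ℝ → Rn n) (u w : ℝ) : ℝ :=
  min (arcLen γ u w) (curveLen γ - arcLen γ u w)

/-- The integrand of the O'Hara energy `E^α`. -/
def ohIntegrand (α : ℝ) (γ : ℝ → Rn n) (u w : ℝ) : ℝ :=
  (1 / ‖γ (u + w) - γ u‖ ^ α - 1 / idist γ u w ^ α) * ‖deriv γ (u + w)‖ * ‖deriv γ u‖

/-- The O'Hara energy `E^α`, with values in `[0,∞]`. -/
def oharaE (α : ℝ) (γ : ℝ → Rn n) : ℝ≥0∞ :=
  ∫⁻ u in Ioc (0:ℝ) 1, ∫⁻ w in Ioo (-(1:ℝ)/2) (1/2), ENNReal.ofReal (ohIntegrand α γ u w)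

/-- The O'Hara energy `E^α` as a real number. -/
def oharaER (α : ℝ) (γ : ℝ → Rn n) : ℝ := (oharaE α γ).toReal

/-- `[−1/2,−ε] ∪ [ε,1/2]`, the `w`-section of `U_ε`. -/
def Wset (ε : ℝ) : Set ℝ := Icc (-(1:ℝ)/2) (-ε) ∪ Icc ε (1/2)

/-- The truncated O'Hara energy `E^α_ε`, an integral over `U_ε`. -/
def oharaEeps (α ε : ℝ) (γ : ℝ → Rn n) : ℝ :=
  ∫ u in Ioc (0:ℝ) 1, ∫ w in Wset ε, ohIntegrand α γ u w

/-- `F` has directional (Gâteaux) derivative `d` at `γ` in direction `h`. -/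
def HasDirDeriv (F : (ℝ → Rn n) → ℝ) (γ h : ℝ → Rn n) (d : ℝ) : Prop :=
  Tendsto (fun τ : ℝ => (F (γ + τ • h) - F γ) / τ) (𝓝[≠] (0:ℝ)) (𝓝 d)

/-- Squared Gagliardo seminorm `[f]²_{H^{s,2}}` of a 1-periodic map. -/
def gagliardoSq (s : ℝ) {E : Type*} [NormedAddCommGroup E] (f : ℝ → E) : ℝ≥0∞ :=
  ∫⁻ u in Ioc (0:ℝ) 1, ∫⁻ w in Ioo (-(1:ℝ)/2) (1/2),
    ENNReal.ofReal (‖f (u + w) - f u‖ ^ 2 / |w| ^ (1 + 2 * s))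

/-- Membership in the fractional Sobolev space `H^{1+σ,2}(ℝ/ℤ,ℝⁿ)`, `σ ∈ (0,1)`:
a 1-periodic `C¹` function whose derivative has finite Gagliardo seminorm of order `σ`. -/
def MemH1 (σ : ℝ) (γ : ℝ → Rn n) : Prop :=
  Function.Periodic γ 1 ∧ ContDiff ℝ 1 γ ∧ gagliardoSq σ (deriv γ) < ⊤

/-- The norm of `H^{1+σ,2}(ℝ/ℤ,ℝⁿ)`. -/
def H1Norm (σ : ℝ) (γ : ℝ → Rn n) : ℝ :=
  Real.sqrt (∫ u in Ioc (0:ℝ) 1, (‖γ u‖ ^ 2 + ‖deriv γ u‖ ^ 2)) +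
    Real.sqrt ((gagliardoSq σ (deriv γ)).toReal)

/-- Membership of a 1-periodic map in `L²(ℝ/ℤ)`. -/
def MemL2per {E : Type*} [NormedAddCommGroup E] (f : ℝ → E) : Prop :=
  Function.Periodic f 1 ∧ AEStronglyMeasurable f (volume : Measure ℝ) ∧
    IntegrableOn (fun u => ‖f u‖ ^ 2) (Ioc (0:ℝ) 1) volume

/-- Membership in the fractional Sobolev space `H^{s,2}(ℝ/ℤ)`, `s ∈ (0,1)`. -/
def MemHs0 (s : ℝ) {E : Type*} [NormedAddCommGroup E] (f : ℝ → E) : Prop :=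
  MemL2per f ∧ gagliardoSq s f < ⊤

/-- The norm of `H^{s,2}(ℝ/ℤ)` for `s ∈ (0,1)`: `‖f‖_{L²} + [f]_{H^{s,2}}`. -/
def Hs0Norm (s : ℝ) {E : Type*} [NormedAddCommGroup E] (f : ℝ → E) : ℝ :=
  Real.sqrt (∫ u in Ioc (0:ℝ) 1, ‖f u‖ ^ 2) + Real.sqrt ((gagliardoSq s f).toReal)

/-- The `k`-th Fourier coefficient (`j`-th component) of a 1-periodic curve. -/
def fCoef (γ : ℝ → Rn n) (k : ℤ) (j : Fin n) : ℂ :=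
  ∫ u in (0:ℝ)..1, (γ u j : ℂ) * Complex.exp ((-2) * (Real.pi : ℂ) * Complex.I * (k : ℂ) * (u : ℂ))

/-- Membership in `H^{s,2}(ℝ/ℤ,ℝⁿ)` via the Fourier characterization:
`((1+|k|²)^{s/2} γ̂(k))_k ∈ ℓ²`. -/
def MemHF (s : ℝ) (γ : ℝ → Rn n) : Prop :=
  Function.Periodic γ 1 ∧ Continuous γ ∧
    Summable (fun k : ℤ => (1 + (k : ℝ) ^ 2) ^ s * ∑ j, ‖fCoef γ k j‖ ^ 2)

/-- The squared Fourier norm of `H^{s,2}(ℝ/ℤ,ℝⁿ)`. -/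
def fNormSq (s : ℝ) (γ : ℝ → Rn n) : ℝ :=
  ∑' k : ℤ, (1 + (k : ℝ) ^ 2) ^ s * ∑ j, ‖fCoef γ k j‖ ^ 2

/-- C¹-norm of a 1-periodic map. -/
def c1Norm (f : ℝ → Rn n) : ℝ := ⨆ u : Icc (0:ℝ) 1, (‖f u.1‖ + ‖deriv f u.1‖)

/-- The integrand of `Q(γ,h)`. -/
def Qintegrand (α : ℝ) (γ h : ℝ → Rn n) (u w : ℝ) : ℝ :=
  ⟪deriv γ u, deriv h u⟫ / |w| ^ α
    - ⟪γ (u + w) - γ u, h (u + w) - h u⟫ / |w| ^ (α + 2)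

/-- The integrand of `R(γ,h)`. -/
def Rintegrand (α : ℝ) (γ h : ℝ → Rn n) (u w : ℝ) : ℝ :=
  2 * ⟪deriv γ u, deriv h u⟫ * (1 / ‖γ (u + w) - γ u‖ ^ α - 1 / |w| ^ α)
    - α * ⟪γ (u + w) - γ u, h (u + w) - h u⟫ *
        (1 / ‖γ (u + w) - γ u‖ ^ (α + 2) - 1 / |w| ^ (α + 2))

/-- `R(γ,h)`, an absolutely convergent double integral over `(ℝ/ℤ) × [−1/2,1/2]`. -/
def Rval (α : ℝ) (γ h : ℝ → Rn n) : ℝ :=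
  ∫ p in (Ioc (0:ℝ) 1) ×ˢ (Icc (-(1:ℝ)/2) (1/2)), Rintegrand α γ h p.1 p.2

section NormEstimates

variable {E : Type*} [NormedAddCommGroup E] [InnerProductSpace ℝ E]

lemma norm_add_smul_le_add {τ : ℝ} (hτ : |τ| ≤ 1) (a k : E) : ‖a + τ • k‖ ≤ ‖a‖ + ‖k‖ := by
  refine (norm_add_le _ _).trans ?_
  rw [norm_smul, Real.norm_eq_abs]
  nlinarith [norm_nonneg k]

lemma abs_norm_add_smul_sub_le (a k : E) (τ₁ τ₂ : ℝ) :
    |‖a + τ₁ • k‖ - ‖a + τ₂ • k‖| ≤ |τ₁ - τ₂| * ‖k‖ := by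
  refine (abs_norm_sub_norm_le _ _).trans_eq ?_
  rw [add_sub_add_left_eq_sub, ← sub_smul, norm_smul, Real.norm_eq_abs]

lemma sq_norm_add_smul_sub (a k : E) (τ₁ τ₂ : ℝ) :
    ‖a + τ₁ • k‖ ^ 2 - ‖a + τ₂ • k‖ ^ 2 = (τ₁ - τ₂) * (2 * ⟪a, k⟫ + (τ₁ + τ₂) * ‖k‖ ^ 2) := by
  rw [norm_add_sq_real, norm_add_sq_real, norm_smul, norm_smul, inner_smul_right,
    inner_smul_right, mul_pow, mul_pow, Real.norm_eq_abs, Real.norm_eq_abs, sq_abs, sq_abs]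
  ring

/-- The mixed second difference of the norm along two segments in the region where the norm is
at least `c`. -/
lemma abs_norm_mixed_difference_le {c M : ℝ} (hc : 0 < c) {a b k l : E} (ha : ‖a‖ ≤ M)
    (hb : ‖b‖ ≤ M) (hk : ‖k‖ ≤ M) (hl : ‖l‖ ≤ M) {τ₁ τ₂ : ℝ} (h₁ : |τ₁| ≤ 1) (h₂ : |τ₂| ≤ 1)
    (ha₁ : c ≤ ‖a + τ₁ • k‖) (ha₂ : c ≤ ‖a + τ₂ • k‖) :
    |(‖a + τ₁ • k‖ - ‖b + τ₁ • l‖) - (‖a + τ₂ • k‖ - ‖b + τ₂ • l‖)| ≤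
      4 * M / c * |τ₁ - τ₂| * (‖a - b‖ + ‖k - l‖) := by
  have hM : 0 ≤ M := (norm_nonneg a).trans ha
  have ea := sq_norm_add_smul_sub a k τ₁ τ₂
  have eb := sq_norm_add_smul_sub b l τ₁ τ₂
  have hS : ∀ τ : ℝ, |τ| ≤ 1 → |‖a + τ • k‖ - ‖b + τ • l‖| ≤ ‖a - b‖ + ‖k - l‖ := fun τ hτ => by
    refine (abs_norm_sub_norm_le _ _).trans ?_
    have : a + τ • k - (b + τ • l) = (a - b) + τ • (k - l) := by rw [smul_sub]; abel
    rw [this]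
    exact norm_add_smul_le_add hτ _ _
  have hnb : |‖b + τ₁ • l‖ - ‖b + τ₂ • l‖| ≤ |τ₁ - τ₂| * M :=
    (abs_norm_add_smul_sub_le b l τ₁ τ₂).trans (by gcongr)
  have hinner : |⟪a, k⟫ - ⟪b, l⟫| ≤ M * (‖a - b‖ + ‖k - l‖) := by
    have : ⟪a, k⟫ - ⟪b, l⟫ = ⟪a - b, k⟫ + ⟪b, k - l⟫ := by
      rw [inner_sub_left, inner_sub_right]; ring
    rw [this]
    refine (abs_add_le _ _).trans ?_
    have i1 := abs_real_inner_le_norm (a - b) k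
    have i2 := abs_real_inner_le_norm b (k - l)
    nlinarith [norm_nonneg (a - b), norm_nonneg (k - l)]
  have hsq : |‖k‖ ^ 2 - ‖l‖ ^ 2| ≤ 2 * M * (‖a - b‖ + ‖k - l‖) := by
    have : ‖k‖ ^ 2 - ‖l‖ ^ 2 = (‖k‖ + ‖l‖) * (‖k‖ - ‖l‖) := by ring
    rw [this, abs_mul, abs_of_nonneg (by positivity)]
    have := abs_norm_sub_norm_le k l
    gcongr
    · linarith
    · linarith [norm_nonneg (a - b)]
  have hN : |(2 * ⟪a, k⟫ + (τ₁ + τ₂) * ‖k‖ ^ 2) - (2 * ⟪b, l⟫ + (τ₁ + τ₂) * ‖l‖ ^ 2)| ≤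
      6 * M * (‖a - b‖ + ‖k - l‖) := by
    have : (2 * ⟪a, k⟫ + (τ₁ + τ₂) * ‖k‖ ^ 2) - (2 * ⟪b, l⟫ + (τ₁ + τ₂) * ‖l‖ ^ 2) =
      2 * (⟪a, k⟫ - ⟪b, l⟫) + (τ₁ + τ₂) * (‖k‖ ^ 2 - ‖l‖ ^ 2) := by ring
    rw [this]
    refine (abs_add_le _ _).trans ?_
    rw [abs_mul, abs_mul, abs_two]
    have h12 : |τ₁ + τ₂| ≤ 2 := (abs_add_le _ _).trans (by linarith)
    have : |τ₁ + τ₂| * |‖k‖ ^ 2 - ‖l‖ ^ 2| ≤ 2 * (2 * M * (‖a - b‖ + ‖k - l‖)) := by gcongr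
    linarith
  set na₁ := ‖a + τ₁ • k‖
  set na₂ := ‖a + τ₂ • k‖
  set nb₁ := ‖b + τ₁ • l‖
  set nb₂ := ‖b + τ₂ • l‖
  set d := ‖a - b‖ + ‖k - l‖
  have key : ((na₁ - nb₁) - (na₂ - nb₂)) * (na₁ + na₂) =
      (τ₁ - τ₂) * ((2 * ⟪a, k⟫ + (τ₁ + τ₂) * ‖k‖ ^ 2) - (2 * ⟪b, l⟫ + (τ₁ + τ₂) * ‖l‖ ^ 2))
        - (nb₁ - nb₂) * ((na₁ - nb₁) + (na₂ - nb₂)) := by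
    linear_combination ea - eb
  have hd : 0 ≤ d := by positivity
  have habs : |(na₁ - nb₁) - (na₂ - nb₂)| * (na₁ + na₂) ≤ 8 * M * |τ₁ - τ₂| * d := by
    rw [← abs_of_nonneg (show 0 ≤ na₁ + na₂ by positivity), ← abs_mul, key]
    refine (abs_sub _ _).trans ?_
    rw [abs_mul, abs_mul]
    have g1 : |τ₁ - τ₂| * |(2 * ⟪a, k⟫ + (τ₁ + τ₂) * ‖k‖ ^ 2) -
      (2 * ⟪b, l⟫ + (τ₁ + τ₂) * ‖l‖ ^ 2)| ≤ |τ₁ - τ₂| * (6 * M * d) := by gcongr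
    have g2 : |nb₁ - nb₂| * |(na₁ - nb₁) + (na₂ - nb₂)| ≤ |τ₁ - τ₂| * M * (2 * d) := by
      gcongr
      exact (abs_add_le _ _).trans (by linarith [hS τ₁ h₁, hS τ₂ h₂])
    linarith
  have : 4 * M / c * |τ₁ - τ₂| * d = 8 * M * |τ₁ - τ₂| * d / (2 * c) := by field_simp; ring
  rw [this, le_div_iff₀ (by positivity)]
  refine le_trans ?_ habs
  gcongr
  linarith

/-- The defect in the Cauchy–Schwarz inequality. -/
def csDefect (a b : E) : ℝ := ‖a‖ * ‖b‖ - ⟪a, b⟫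

lemma csDefect_nonneg (a b : E) : 0 ≤ csDefect a b := sub_nonneg.2 (real_inner_le_norm a b)

lemma csDefect_eq (a b : E) : csDefect a b = (‖a - b‖ ^ 2 - (‖a‖ - ‖b‖) ^ 2) / 2 := by
  rw [csDefect, norm_sub_sq_real]; ring

lemma csDefect_add_smul_le {τ : ℝ} (hτ : |τ| ≤ 1) (a b k l : E) :
    csDefect (a + τ • k) (b + τ • l) ≤ ‖a - b‖ ^ 2 + ‖k - l‖ ^ 2 := by
  have h : a + τ • k - (b + τ • l) = (a - b) + τ • (k - l) := by rw [smul_sub]; abel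
  rw [csDefect_eq, h]
  have := norm_add_smul_le_add hτ (a - b) (k - l)
  have h2 : ‖a - b + τ • (k - l)‖ ^ 2 ≤ (‖a - b‖ + ‖k - l‖) ^ 2 := by gcongr
  nlinarith [sq_nonneg (‖a + τ • k‖ - ‖b + τ • l‖), sq_nonneg (‖a - b‖ - ‖k - l‖)]

lemma abs_csDefect_sub_le {c M : ℝ} (hc : 0 < c) {a b k l : E} (ha : ‖a‖ ≤ M)
    (hb : ‖b‖ ≤ M) (hk : ‖k‖ ≤ M) (hl : ‖l‖ ≤ M) {τ₁ τ₂ : ℝ} (h₁ : |τ₁| ≤ 1) (h₂ : |τ₂| ≤ 1)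
    (ha₁ : c ≤ ‖a + τ₁ • k‖) (ha₂ : c ≤ ‖a + τ₂ • k‖) :
    |csDefect (a + τ₁ • k) (b + τ₁ • l) - csDefect (a + τ₂ • k) (b + τ₂ • l)| ≤
      2 * (1 + 4 * M / c) * |τ₁ - τ₂| * (‖a - b‖ ^ 2 + ‖k - l‖ ^ 2) := by
  have hM : 0 ≤ M := (norm_nonneg a).trans ha
  have hmix := abs_norm_mixed_difference_le hc ha hb hk hl h₁ h₂ ha₁ ha₂
  have hx : ∀ τ : ℝ, a + τ • k - (b + τ • l) = (a - b) + τ • (k - l) := fun τ => by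
    rw [smul_sub]; abel
  have hx1 : ∀ τ : ℝ, |τ| ≤ 1 → ‖(a - b) + τ • (k - l)‖ ≤ ‖a - b‖ + ‖k - l‖ :=
    fun τ hτ => norm_add_smul_le_add hτ _ _
  have hr : ∀ τ : ℝ, |τ| ≤ 1 → |‖a + τ • k‖ - ‖b + τ • l‖| ≤ ‖a - b‖ + ‖k - l‖ := fun τ hτ =>
    (abs_norm_sub_norm_le _ _).trans ((hx τ).symm ▸ hx1 τ hτ)
  have hxd := abs_norm_add_smul_sub_le (a - b) (k - l) τ₁ τ₂
  rw [csDefect_eq, csDefect_eq, hx, hx]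
  have p1 := hx1 τ₁ h₁
  have p2 := hx1 τ₂ h₂
  have r1 := hr τ₁ h₁
  have r2 := hr τ₂ h₂
  set x₁ := ‖a - b + τ₁ • (k - l)‖
  set x₂ := ‖a - b + τ₂ • (k - l)‖
  set s₁ := ‖a + τ₁ • k‖ - ‖b + τ₁ • l‖
  set s₂ := ‖a + τ₂ • k‖ - ‖b + τ₂ • l‖
  set d := ‖a - b‖ + ‖k - l‖ with hd
  have hd0 : 0 ≤ d := by positivity
  have hd2 : d ^ 2 ≤ 2 * (‖a - b‖ ^ 2 + ‖k - l‖ ^ 2) := by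
    nlinarith [sq_nonneg (‖a - b‖ - ‖k - l‖)]
  have e : (x₁ ^ 2 - s₁ ^ 2) / 2 - (x₂ ^ 2 - s₂ ^ 2) / 2 =
      ((x₁ + x₂) / 2) * (x₁ - x₂) - ((s₁ + s₂) / 2) * (s₁ - s₂) := by ring
  have hx0 : 0 ≤ x₁ := norm_nonneg _
  have hx0' : 0 ≤ x₂ := norm_nonneg _
  have b1 : |(x₁ + x₂) / 2| ≤ d := by rw [abs_of_nonneg (by positivity)]; linarith
  have b2 : |(s₁ + s₂) / 2| ≤ d := by
    rw [abs_div, abs_two]; linarith [abs_add_le s₁ s₂]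
  calc |(x₁ ^ 2 - s₁ ^ 2) / 2 - (x₂ ^ 2 - s₂ ^ 2) / 2|
      ≤ |(x₁ + x₂) / 2| * |x₁ - x₂| + |(s₁ + s₂) / 2| * |s₁ - s₂| := by
        rw [e, ← abs_mul, ← abs_mul]; exact abs_sub _ _
    _ ≤ d * (|τ₁ - τ₂| * d) + d * (4 * M / c * |τ₁ - τ₂| * d) := by
        gcongr
        refine hxd.trans ?_
        gcongr
        linarith [norm_nonneg (a - b)]
    _ = (1 + 4 * M / c) * |τ₁ - τ₂| * d ^ 2 := by ring
    _ ≤ (1 + 4 * M / c) * |τ₁ - τ₂| * (2 * (‖a - b‖ ^ 2 + ‖k - l‖ ^ 2)) := by gcongr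
    _ = _ := by ring

end NormEstimates

lemma abs_rpow_neg_sub_le {c β : ℝ} (hc : 0 < c) (hβ : 0 < β) {x y : ℝ} (hx : c ≤ x)
    (hy : c ≤ y) : |x ^ (-β) - y ^ (-β)| ≤ β * c ^ (-β - 1) * |x - y| := by
  refine (convex_Ici c).norm_image_sub_le_of_norm_hasDerivWithin_le (f := fun t : ℝ => t ^ (-β))
    (f' := fun t => -β * t ^ (-β - 1)) (fun t ht => ?_) (fun t ht => ?_) hy hx
  · exact (Real.hasDerivAt_rpow_const (Or.inl (hc.trans_le ht).ne')).hasDerivWithinAt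
  · have ht0 : 0 < t := hc.trans_le ht
    rw [norm_mul, norm_neg, Real.norm_of_nonneg hβ.le,
      Real.norm_of_nonneg (Real.rpow_nonneg ht0.le _)]
    exact mul_le_mul_of_nonneg_left
      (Real.rpow_le_rpow_of_nonpos hc ht (by linarith)) hβ.le

lemma abs_rpow_neg_mixed_difference_le {c β : ℝ} (hc : 0 < c) (hβ : 0 < β) {a₁ a₂ e : ℝ}
    (h₁ : c ≤ a₁) (h₂ : c ≤ a₂) (he : 0 ≤ e) :
    |(a₁ ^ (-β) - (a₁ + e) ^ (-β)) - (a₂ ^ (-β) - (a₂ + e) ^ (-β))| ≤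
      β * ((β + 1) * c ^ (-(β + 1) - 1)) * e * |a₁ - a₂| := by
  refine (convex_Ici c).norm_image_sub_le_of_norm_hasDerivWithin_le
    (f := fun t : ℝ => t ^ (-β) - (t + e) ^ (-β))
    (f' := fun t => -β * t ^ (-β - 1) - -β * (t + e) ^ (-β - 1)) (fun t ht => ?_)
    (fun t ht => ?_) h₂ h₁
  · have ht0 : 0 < t := hc.trans_le ht
    refine HasDerivAt.hasDerivWithinAt (HasDerivAt.sub
      (Real.hasDerivAt_rpow_const (Or.inl ht0.ne')) ?_)
    exact HasDerivAt.comp_add_const t e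
      (Real.hasDerivAt_rpow_const (x := t + e) (p := -β) (Or.inl (by positivity)))
  · have ht' : c ≤ t := ht
    rw [← mul_sub, norm_mul, norm_neg, Real.norm_of_nonneg hβ.le, mul_assoc]
    refine mul_le_mul_of_nonneg_left ?_ hβ.le
    have h := abs_rpow_neg_sub_le hc (show 0 < β + 1 by linarith) ht'
      (show c ≤ t + e by linarith)
    rw [show t - (t + e) = -e by ring, abs_neg, abs_of_nonneg he] at h
    rw [Real.norm_eq_abs, show -β - 1 = -(β + 1) by ring]
    exact h

/-- The function `(a, e) ↦ a⁻ᵝ - (a + e)⁻ᵝ` is `O(e)` and has increments of order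
`e |a₁ - a₂| + |e₁ - e₂|`, as long as `a` stays away from zero. -/
lemma exists_rpow_neg_difference_bound {c β : ℝ} (hc : 0 < c) (hβ : 0 < β) :
    ∃ K : ℝ, 0 ≤ K ∧
      (∀ a e : ℝ, c ≤ a → 0 ≤ e → |a ^ (-β) - (a + e) ^ (-β)| ≤ K * e) ∧
      ∀ a₁ a₂ e₁ e₂ : ℝ, c ≤ a₁ → c ≤ a₂ → 0 ≤ e₁ → 0 ≤ e₂ →
        |(a₁ ^ (-β) - (a₁ + e₁) ^ (-β)) - (a₂ ^ (-β) - (a₂ + e₂) ^ (-β))| ≤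
          K * (e₁ * |a₁ - a₂| + |e₁ - e₂|) := by
  set K₁ := β * c ^ (-β - 1)
  set K₂ := β * ((β + 1) * c ^ (-(β + 1) - 1))
  have hK₁ : 0 ≤ K₁ := by positivity
  have hK₂ : 0 ≤ K₂ := by positivity
  refine ⟨K₁ + K₂, by positivity, fun a e ha he => ?_, fun a₁ a₂ e₁ e₂ h₁ h₂ g₁ g₂ => ?_⟩
  · have := abs_rpow_neg_sub_le hc hβ ha (show c ≤ a + e by linarith)
    rw [show a - (a + e) = -e by ring, abs_neg, abs_of_nonneg he] at this
    exact this.trans (by gcongr; linarith)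
  · have m1 := abs_rpow_neg_mixed_difference_le hc hβ h₁ h₂ g₁
    have m2 := abs_rpow_neg_sub_le hc hβ (show c ≤ a₂ + e₂ by linarith)
      (show c ≤ a₂ + e₁ by linarith)
    rw [show a₂ + e₂ - (a₂ + e₁) = -(e₁ - e₂) by ring, abs_neg] at m2
    have hsplit : (a₁ ^ (-β) - (a₁ + e₁) ^ (-β)) - (a₂ ^ (-β) - (a₂ + e₂) ^ (-β)) =
        ((a₁ ^ (-β) - (a₁ + e₁) ^ (-β)) - (a₂ ^ (-β) - (a₂ + e₁) ^ (-β))) +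
          ((a₂ + e₂) ^ (-β) - (a₂ + e₁) ^ (-β)) := by ring
    rw [hsplit]
    refine (abs_add_le _ _).trans ((add_le_add m1 m2).trans ?_)
    have q1 : 0 ≤ e₁ * |a₁ - a₂| := by positivity
    have q2 : 0 ≤ |e₁ - e₂| := abs_nonneg _
    change K₂ * e₁ * |a₁ - a₂| + K₁ * |e₁ - e₂| ≤ _
    nlinarith [mul_nonneg hK₁ q1, mul_nonneg hK₂ q2]

/-- The mean speed of a curve with derivative `f` over the segment from `u` to `u + w`. -/
def segSpeed (f : ℝ → Rn n) (u w : ℝ) : ℝ := ∫ x in (0:ℝ)..1, ‖f (u + x * w)‖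

/-- The mean of `f` over the segment from `u` to `u + w`. -/
def segMean (f : ℝ → Rn n) (u w : ℝ) : Rn n := ∫ x in (0:ℝ)..1, f (u + x * w)

/-- The mean square oscillation of `f` over the segment from `u` to `u + w` around `f u`. -/
def segOsc (f : ℝ → Rn n) (u w : ℝ) : ℝ := ∫ x in (0:ℝ)..1, ‖f (u + x * w) - f u‖ ^ 2

section Segments

variable {f P H : ℝ → Rn n}

lemma continuous_segSpeed (hf : Continuous f) : Continuous fun p : ℝ × ℝ => segSpeed f p.1 p.2 :=
  intervalIntegral.continuous_parametric_intervalIntegral_of_continuous'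
    (f := fun (p : ℝ × ℝ) x => ‖f (p.1 + x * p.2)‖) (by fun_prop) 0 1

lemma continuous_segMean (hf : Continuous f) : Continuous fun p : ℝ × ℝ => segMean f p.1 p.2 :=
  intervalIntegral.continuous_parametric_intervalIntegral_of_continuous'
    (f := fun (p : ℝ × ℝ) x => f (p.1 + x * p.2)) (by fun_prop) 0 1

lemma continuous_segOsc (hf : Continuous f) : Continuous fun p : ℝ × ℝ => segOsc f p.1 p.2 :=
  intervalIntegral.continuous_parametric_intervalIntegral_of_continuous'
    (f := fun (p : ℝ × ℝ) x => ‖f (p.1 + x * p.2) - f p.1‖ ^ 2) (by fun_prop) 0 1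

lemma segOsc_nonneg (f : ℝ → Rn n) (u w : ℝ) : 0 ≤ segOsc f u w :=
  intervalIntegral.integral_nonneg zero_le_one fun _ _ => by positivity

lemma segSpeed_nonneg (f : ℝ → Rn n) (u w : ℝ) : 0 ≤ segSpeed f u w :=
  intervalIntegral.integral_nonneg zero_le_one fun _ _ => by positivity

lemma norm_segMean_le_segSpeed (f : ℝ → Rn n) (u w : ℝ) : ‖segMean f u w‖ ≤ segSpeed f u w :=
  intervalIntegral.norm_integral_le_integral_norm zero_le_one

lemma segSpeed_le {C : ℝ} (hf : Continuous f) (hC : ∀ x, ‖f x‖ ≤ C) (u w : ℝ) :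
    segSpeed f u w ≤ C := by
  have := intervalIntegral.integral_mono_on (μ := volume) (zero_le_one' ℝ)
    (f := fun x => ‖f (u + x * w)‖) (g := fun _ => C)
    (Continuous.intervalIntegrable (by fun_prop) _ _) (by simp) (fun x _ => hC _)
  simpa [segSpeed] using this

lemma le_segSpeed {c : ℝ} (hf : Continuous f) (hc : ∀ x, c ≤ ‖f x‖) (u w : ℝ) :
    c ≤ segSpeed f u w := by
  have := intervalIntegral.integral_mono_on (μ := volume) (zero_le_one' ℝ)
    (g := fun x => ‖f (u + x * w)‖) (f := fun _ => c) (by simp)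
    (Continuous.intervalIntegrable (by fun_prop) _ _) (fun x _ => hc _)
  simpa [segSpeed] using this

lemma segSpeed_add_one (hf : Function.Periodic f 1) (u w : ℝ) :
    segSpeed f (u + 1) w = segSpeed f u w := by
  unfold segSpeed
  congr 1
  ext x
  rw [add_right_comm, hf]

lemma mul_segSpeed (f : ℝ → Rn n) (u w : ℝ) : w * segSpeed f u w = ∫ θ in u..(u + w), ‖f θ‖ := by
  have := intervalIntegral.smul_integral_comp_add_mul (a := 0) (b := 1) (fun θ => ‖f θ‖) w u
  simpa [-intervalIntegral.smul_integral_comp_add_mul, segSpeed, mul_comm _ w] using this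

lemma smul_segMean (f : ℝ → Rn n) (u w : ℝ) : w • segMean f u w = ∫ θ in u..(u + w), f θ := by
  simp [segMean, mul_comm _ w]

lemma sq_segSpeed_sub_sq_norm_segMean (hf : Continuous f) (u w : ℝ) :
    segSpeed f u w ^ 2 - ‖segMean f u w‖ ^ 2 =
      ∫ x in (0:ℝ)..1, ∫ y in (0:ℝ)..1, csDefect (f (u + x * w)) (f (u + y * w)) := by
  have inner_int : ∀ a : Rn n, ∫ y in (0:ℝ)..1, csDefect a (f (u + y * w)) =
      ‖a‖ * segSpeed f u w - ⟪a, segMean f u w⟫ := fun a => by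
    simp only [csDefect]
    rw [intervalIntegral.integral_sub (Continuous.intervalIntegrable (by fun_prop) _ _)
      (Continuous.intervalIntegrable (by fun_prop) _ _), intervalIntegral.integral_const_mul]
    congr 1
    exact (innerSL ℝ a).intervalIntegral_comp_comm
      (Continuous.intervalIntegrable (by fun_prop) _ _)
  simp only [inner_int]
  rw [intervalIntegral.integral_sub (Continuous.intervalIntegrable (by fun_prop) _ _)
      (Continuous.intervalIntegrable (by fun_prop) _ _), intervalIntegral.integral_mul_const, sq]
  congr 1
  rw [← real_inner_self_eq_norm_sq]
  simp only [real_inner_comm (segMean f u w)]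
  exact ((innerSL ℝ (segMean f u w)).intervalIntegral_comp_comm
      (Continuous.intervalIntegrable (by fun_prop) _ _)).symm

lemma continuous_csDefect {f g : ℝ × ℝ → Rn n} (hf : Continuous f) (hg : Continuous g) :
    Continuous fun p => csDefect (f p) (g p) := by unfold csDefect; fun_prop

/-- Bounding a double integral over the unit square by the oscillations of `P` and `H`. -/
lemma abs_integral_integral_le_segOsc (hP : Continuous P) (hH : Continuous H) {u w C : ℝ}
    {q : ℝ → ℝ → ℝ} (hC : 0 ≤ C)
    (hqc : Continuous fun p : ℝ × ℝ => q p.1 p.2)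
    (hq : ∀ x ∈ Icc (0:ℝ) 1, ∀ y ∈ Icc (0:ℝ) 1,
      |q x y| ≤ C * (‖P (u + x * w) - P (u + y * w)‖ ^ 2 +
        ‖H (u + x * w) - H (u + y * w)‖ ^ 2)) :
    |∫ x in (0:ℝ)..1, ∫ y in (0:ℝ)..1, q x y| ≤ 4 * C * (segOsc P u w + segOsc H u w) := by
  set r : ℝ → ℝ := fun x => ‖P (u + x * w) - P u‖ ^ 2 + ‖H (u + x * w) - H u‖ ^ 2 with hr
  have hrc : Continuous r := by fun_prop
  have hr1 : ∫ x in (0:ℝ)..1, r x = segOsc P u w + segOsc H u w :=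
    intervalIntegral.integral_add (Continuous.intervalIntegrable (by fun_prop) _ _)
      (Continuous.intervalIntegrable (by fun_prop) _ _)
  have tri : ∀ a b z : Rn n, ‖a - b‖ ^ 2 ≤ 2 * (‖a - z‖ ^ 2 + ‖b - z‖ ^ 2) := fun a b z => by
    have := norm_sub_le_norm_sub_add_norm_sub a z b
    rw [norm_sub_rev z b] at this
    have h2 : ‖a - b‖ ^ 2 ≤ (‖a - z‖ + ‖b - z‖) ^ 2 := by gcongr
    nlinarith [sq_nonneg (‖a - z‖ - ‖b - z‖)]
  have hqr : ∀ x ∈ Icc (0:ℝ) 1, ∀ y ∈ Icc (0:ℝ) 1, |q x y| ≤ 2 * C * (r x + r y) :=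
    fun x hx y hy => by
      refine (hq x hx y hy).trans ?_
      have t1 := tri (P (u + x * w)) (P (u + y * w)) (P u)
      have t2 := tri (H (u + x * w)) (H (u + y * w)) (H u)
      rw [mul_assoc, mul_left_comm]
      refine mul_le_mul_of_nonneg_left ?_ hC
      simp only [hr]; linarith
  have hin : ∀ x ∈ Icc (0:ℝ) 1, |∫ y in (0:ℝ)..1, q x y| ≤
      2 * C * (r x + (segOsc P u w + segOsc H u w)) := fun x hx => by
    refine (intervalIntegral.abs_integral_le_integral_abs zero_le_one).trans ?_
    refine (intervalIntegral.integral_mono_on zero_le_one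
      (g := fun y => 2 * C * (r x + r y)) (Continuous.intervalIntegrable ?_ _ _)
      (Continuous.intervalIntegrable (by fun_prop) _ _) (hqr x hx)).trans_eq ?_
    · exact (hqc.comp (Continuous.prodMk_right x)).abs
    · rw [intervalIntegral.integral_const_mul, intervalIntegral.integral_add (by simp)
        (hrc.intervalIntegrable _ _), hr1]
      simp
  refine (intervalIntegral.abs_integral_le_integral_abs zero_le_one).trans ?_
  refine (intervalIntegral.integral_mono_on zero_le_one
    (g := fun x => 2 * C * (r x + (segOsc P u w + segOsc H u w)))
    (Continuous.intervalIntegrable ?_ _ _)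
    (Continuous.intervalIntegrable (by fun_prop) _ _) hin).trans_eq ?_
  · exact (intervalIntegral.continuous_parametric_intervalIntegral_of_continuous'
      (f := q) hqc 0 1).abs
  · rw [intervalIntegral.integral_const_mul, intervalIntegral.integral_add
      (hrc.intervalIntegrable _ _) (by simp), hr1]
    simp
    ring

lemma sq_segSpeed_sub_sq_norm_segMean_le (hP : Continuous P) (hH : Continuous H) {τ : ℝ}
    (hτ : |τ| ≤ 1) (u w : ℝ) :
    segSpeed (P + τ • H) u w ^ 2 - ‖segMean (P + τ • H) u w‖ ^ 2 ≤
      4 * (segOsc P u w + segOsc H u w) := by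
  rw [sq_segSpeed_sub_sq_norm_segMean (by fun_prop)]
  refine (le_abs_self _).trans ?_
  have := abs_integral_integral_le_segOsc hP hH (u := u) (w := w) zero_le_one
    (q := fun x y => csDefect ((P + τ • H) (u + x * w)) ((P + τ • H) (u + y * w)))
    (continuous_csDefect (by fun_prop) (by fun_prop)) (fun x _ y _ => by
      rw [abs_of_nonneg (csDefect_nonneg _ _), one_mul]
      exact csDefect_add_smul_le hτ _ _ _ _)
  simpa using this

lemma abs_segSpeed_defect_sub_le (hP : Continuous P) (hH : Continuous H) {c M : ℝ} (hc : 0 < c)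
    (hPM : ∀ x, ‖P x‖ ≤ M) (hHM : ∀ x, ‖H x‖ ≤ M) {τ₁ τ₂ : ℝ} (h₁ : |τ₁| ≤ 1) (h₂ : |τ₂| ≤ 1)
    (hc₁ : ∀ x, c ≤ ‖P x + τ₁ • H x‖) (hc₂ : ∀ x, c ≤ ‖P x + τ₂ • H x‖) (u w : ℝ) :
    |(segSpeed (P + τ₁ • H) u w ^ 2 - ‖segMean (P + τ₁ • H) u w‖ ^ 2) -
      (segSpeed (P + τ₂ • H) u w ^ 2 - ‖segMean (P + τ₂ • H) u w‖ ^ 2)| ≤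
      4 * (2 * (1 + 4 * M / c) * |τ₁ - τ₂|) * (segOsc P u w + segOsc H u w) := by
  have hM : 0 ≤ M := (norm_nonneg _).trans (hPM 0)
  have cc : ∀ τ : ℝ, Continuous fun p : ℝ × ℝ =>
      csDefect ((P + τ • H) (u + p.1 * w)) ((P + τ • H) (u + p.2 * w)) := fun τ =>
    continuous_csDefect (by fun_prop) (by fun_prop)
  rw [sq_segSpeed_sub_sq_norm_segMean (by fun_prop), sq_segSpeed_sub_sq_norm_segMean (by fun_prop),
    ← intervalIntegral.integral_sub]
  rotate_left
  · exact (intervalIntegral.continuous_parametric_intervalIntegral_of_continuous'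
      (cc τ₁) 0 1).intervalIntegrable _ _
  · exact (intervalIntegral.continuous_parametric_intervalIntegral_of_continuous'
      (cc τ₂) 0 1).intervalIntegrable _ _
  have hsub : ∀ x, (∫ y in (0:ℝ)..1,
        csDefect ((P + τ₁ • H) (u + x * w)) ((P + τ₁ • H) (u + y * w))) -
      (∫ y in (0:ℝ)..1, csDefect ((P + τ₂ • H) (u + x * w)) ((P + τ₂ • H) (u + y * w))) =
      ∫ y in (0:ℝ)..1, (csDefect ((P + τ₁ • H) (u + x * w)) ((P + τ₁ • H) (u + y * w)) -
        csDefect ((P + τ₂ • H) (u + x * w)) ((P + τ₂ • H) (u + y * w))) := fun x => by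
    rw [intervalIntegral.integral_sub]
    · exact ((cc τ₁).comp (Continuous.prodMk_right x)).intervalIntegrable _ _
    · exact ((cc τ₂).comp (Continuous.prodMk_right x)).intervalIntegrable _ _
  simp only [hsub]
  refine abs_integral_integral_le_segOsc hP hH (by positivity) ((cc τ₁).sub (cc τ₂))
    (fun x _ y _ => ?_)
  exact abs_csDefect_sub_le hc (hPM _) (hPM _) (hHM _) (hHM _) h₁ h₂ (hc₁ _) (hc₂ _)

lemma abs_segSpeed_sub_le (hP : Continuous P) (hH : Continuous H) {M : ℝ}
    (hHM : ∀ x, ‖H x‖ ≤ M) (τ₁ τ₂ u w : ℝ) :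
    |segSpeed (P + τ₁ • H) u w - segSpeed (P + τ₂ • H) u w| ≤ M * |τ₁ - τ₂| := by
  unfold segSpeed
  rw [← intervalIntegral.integral_sub (Continuous.intervalIntegrable (by fun_prop) _ _)
    (Continuous.intervalIntegrable (by fun_prop) _ _)]
  have := intervalIntegral.norm_integral_le_of_norm_le_const (a := 0) (b := 1)
    (f := fun x => ‖(P + τ₁ • H) (u + x * w)‖ - ‖(P + τ₂ • H) (u + x * w)‖)
    (C := M * |τ₁ - τ₂|) (fun x _ => by
      refine (abs_norm_add_smul_sub_le _ _ _ _).trans ?_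
      rw [mul_comm]
      gcongr
      exact hHM _)
  simpa using this

lemma segMean_add_smul (hP : Continuous P) (hH : Continuous H) (τ u w : ℝ) :
    segMean (P + τ • H) u w = segMean P u w + τ • segMean H u w := by
  unfold segMean
  rw [← intervalIntegral.integral_smul, ← intervalIntegral.integral_add
    (Continuous.intervalIntegrable (by fun_prop) _ _)
    (Continuous.intervalIntegrable (by fun_prop) _ _)]
  rfl

lemma hasDerivAt_norm_add_smul {a k : Rn n} (ha : a ≠ 0) :
    HasDerivAt (fun τ : ℝ => ‖a + τ • k‖) (⟪a, k⟫ / ‖a‖) 0 := by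
  have h1 : HasDerivAt (fun τ : ℝ => a + τ • k) k 0 := by
    simpa using ((hasDerivAt_id (0:ℝ)).smul_const k).const_add a
  have h2 := h1.norm_sq.sqrt (by simpa using ha)
  simp only [Real.sqrt_sq (norm_nonneg _)] at h2
  convert h2 using 1
  simp
  field_simp

lemma differentiableAt_segSpeed (hP : Continuous P) (hH : Continuous H) (hP0 : ∀ x, P x ≠ 0)
    {M : ℝ} (hHM : ∀ x, ‖H x‖ ≤ M) (u w : ℝ) :
    DifferentiableAt ℝ (fun τ : ℝ => segSpeed (P + τ • H) u w) 0 := by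
  refine (intervalIntegral.hasDerivAt_integral_of_dominated_loc_of_lip (μ := volume)
    (F := fun τ x => ‖(P + τ • H) (u + x * w)‖)
    (F' := fun x => ⟪P (u + x * w), H (u + x * w)⟫ / ‖P (u + x * w)‖) (bound := fun _ => M)
    univ_mem (.of_forall fun τ => ?_) (Continuous.intervalIntegrable (by fun_prop) _ _) ?_
    (.of_forall fun x _ => ?_) (by simp) (.of_forall fun x _ => ?_)).2.differentiableAt
  · exact Continuous.aestronglyMeasurable (by fun_prop)
  · refine Continuous.aestronglyMeasurable (Continuous.div (by fun_prop) (by fun_prop) ?_)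
    exact fun x => norm_ne_zero_iff.2 (hP0 _)
  · refine LipschitzOnWith.of_dist_le_mul fun τ₁ _ τ₂ _ => ?_
    rw [Real.dist_eq, Real.dist_eq, Real.coe_nnabs]
    exact (abs_norm_add_smul_sub_le _ _ _ _).trans (mul_comm |M| _ ▸
      mul_le_mul_of_nonneg_left ((hHM _).trans (le_abs_self M)) (abs_nonneg _))
  · exact hasDerivAt_norm_add_smul (hP0 _)

end Segments

section Curves

variable {γ h : ℝ → Rn n}

lemma deriv_add_smul (hγ : ContDiff ℝ 1 γ) (hh : ContDiff ℝ 1 h) (τ : ℝ) :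
    deriv (γ + τ • h) = deriv γ + τ • deriv h := by
  ext1 x
  have h1 := (hγ.differentiable one_ne_zero) x
  have h2 := (hh.differentiable one_ne_zero) x
  simp [deriv_add h1 (h2.const_smul τ), deriv_const_smul_field]

lemma Function.Periodic.deriv {E : Type*} [NormedAddCommGroup E] [NormedSpace ℝ E] {f : ℝ → E}
    {T : ℝ} (hf : Function.Periodic f T) : Function.Periodic (deriv f) T := fun x => by
  rw [← deriv_comp_add_const, funext hf]

lemma Function.Periodic.exists_norm_le {E : Type*} [NormedAddCommGroup E] {f : ℝ → E}
    (hf : Function.Periodic f 1) (hc : Continuous f) : ∃ M, ∀ x, ‖f x‖ ≤ M := by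
  obtain ⟨M, hM⟩ := (isCompact_Icc (a := (0:ℝ)) (b := 1)).exists_bound_of_continuousOn
    hc.continuousOn
  refine ⟨M, fun x => ?_⟩
  obtain ⟨y, hy, hxy⟩ := hf.exists_mem_Ico₀ one_pos x
  exact hxy ▸ hM y (Ico_subset_Icc_self hy)

lemma sub_eq_smul_segMean (hγ : ContDiff ℝ 1 γ) (u w : ℝ) :
    γ (u + w) - γ u = w • segMean (deriv γ) u w := by
  rw [smul_segMean, intervalIntegral.integral_deriv_eq_sub
    (fun x _ => (hγ.differentiable one_ne_zero) x)
    ((hγ.continuous_deriv le_rfl).intervalIntegrable _ _)]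

lemma arcLen_eq (γ : ℝ → Rn n) (u w : ℝ) : arcLen γ u w = |w| * segSpeed (deriv γ) u w := by
  rw [arcLen, ← mul_segSpeed, abs_mul, abs_of_nonneg (segSpeed_nonneg _ _ _)]

lemma curveLen_eq (γ : ℝ → Rn n) : curveLen γ = segSpeed (deriv γ) 0 1 := by
  simp [curveLen, segSpeed]

lemma idist_eq (γ : ℝ → Rn n) (u w : ℝ) : idist γ u w =
    min (|w| * segSpeed (deriv γ) u w)
      (segSpeed (deriv γ) 0 1 - |w| * segSpeed (deriv γ) u w) := by
  rw [idist, arcLen_eq, curveLen_eq]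

lemma continuous_idist (hγ : ContDiff ℝ 1 γ) :
    Continuous fun p : ℝ × ℝ => idist γ p.1 p.2 := by
  have := continuous_segSpeed (hγ.continuous_deriv le_rfl)
  simp only [idist_eq]
  fun_prop

lemma idist_add_neg (γ : ℝ → Rn n) (u w : ℝ) : idist γ (u + w) (-w) = idist γ u w := by
  have : arcLen γ (u + w) (-w) = arcLen γ u w := by
    rw [arcLen, arcLen, add_neg_cancel_right, intervalIntegral.integral_symm, abs_neg]
  rw [idist, idist, this]

lemma idist_add_one (hγ : Function.Periodic γ 1) (u w : ℝ) :
    idist γ (u + 1) w = idist γ u w := by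
  simp only [idist_eq, segSpeed_add_one hγ.deriv]

lemma norm_sub_le_idist (hγ : ContDiff ℝ 1 γ) (hper : Function.Periodic γ 1) {u w : ℝ}
    (hw : |w| ≤ 1) : ‖γ (u + w) - γ u‖ ≤ idist γ u w := by
  wlog hw0 : 0 ≤ w generalizing u w
  · have := this (u := u + w) (w := -w) (by rwa [abs_neg]) (by linarith)
    rwa [add_neg_cancel_right, idist_add_neg, norm_sub_rev] at this
  have hc := hγ.continuous_deriv le_rfl
  have hint : ∀ a b : ℝ, IntervalIntegrable (fun θ => ‖deriv γ θ‖) volume a b := fun a b =>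
    hc.norm.intervalIntegrable a b
  have harc : arcLen γ u w = ∫ θ in u..(u + w), ‖deriv γ θ‖ := by
    rw [arcLen, ← mul_segSpeed, abs_of_nonneg (mul_nonneg hw0 (segSpeed_nonneg _ _ _))]
  have hlen : ∀ a b : ℝ, a ≤ b → ‖γ b - γ a‖ ≤ ∫ θ in a..b, ‖deriv γ θ‖ := fun a b hab => by
    rw [← intervalIntegral.integral_deriv_eq_sub (fun x _ => (hγ.differentiable one_ne_zero) x)
      (hc.intervalIntegrable _ _)]
    exact intervalIntegral.norm_integral_le_integral_norm hab
  refine le_min ?_ ?_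
  · rw [harc]; exact hlen _ _ (by linarith)
  · have h1 := hlen (u + w) (u + 1) (by linarith [le_abs_self w])
    rw [hper, norm_sub_rev] at h1
    have h2 : curveLen γ = ∫ θ in u..(u + 1), ‖deriv γ θ‖ := by
      have : Function.Periodic (fun θ => ‖deriv γ θ‖) 1 := fun x => by simp only [hper.deriv x]
      have := this.intervalIntegral_add_eq 0 u
      rwa [zero_add] at this
    rw [h2, harc]
    linarith [intervalIntegral.integral_add_adjacent_intervals (hint u (u + w))
      (hint (u + w) (u + 1))]

lemma segMean_ne_zero (hγ : ContDiff ℝ 1 γ) (hinj : PerInjective γ) (hreg : RegularCurve γ)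
    {u w : ℝ} (hw : |w| < 1) : segMean (deriv γ) u w ≠ 0 := by
  rcases eq_or_ne w 0 with rfl | hw0
  · simpa [segMean] using hreg u
  · intro h0
    have := sub_eq_smul_segMean hγ u w
    rw [h0, smul_zero, sub_eq_zero] at this
    obtain ⟨k, hk⟩ := hinj _ _ this
    have hwk : w = ((-k : ℤ) : ℝ) := by push_cast; linarith
    rw [hwk, ← Int.cast_abs] at hw
    have : |(-k : ℤ)| < 1 := by exact_mod_cast hw
    rw [Int.abs_lt_one_iff] at this
    exact hw0 (by rw [hwk, this]; simp)

/-- Uniform bounds along the perturbation `γ + τ h` for small `τ`. -/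
structure PerturbBounds (γ h : ℝ → Rn n) (c M τ₀ : ℝ) : Prop where
  c_pos : 0 < c
  τ₀_pos : 0 < τ₀
  τ₀_le : τ₀ ≤ 1
  norm_left_le : ∀ x, ‖deriv γ x‖ ≤ M
  norm_right_le : ∀ x, ‖deriv h x‖ ≤ M
  le_norm : ∀ τ : ℝ, |τ| ≤ τ₀ → ∀ x, c ≤ ‖deriv γ x + τ • deriv h x‖
  le_norm_segMean : ∀ τ : ℝ, |τ| ≤ τ₀ → ∀ u ∈ Icc (0:ℝ) 1, ∀ w : ℝ, |w| ≤ 1 / 2 →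
    c ≤ ‖segMean (deriv γ + τ • deriv h) u w‖

lemma exists_perturbBounds (hγ : ContDiff ℝ 1 γ) (hγp : Function.Periodic γ 1)
    (hinj : PerInjective γ) (hreg : RegularCurve γ) (hh : ContDiff ℝ 1 h)
    (hhp : Function.Periodic h 1) : ∃ c M τ₀, PerturbBounds γ h c M τ₀ := by
  have hP := hγ.continuous_deriv le_rfl
  have hH := hh.continuous_deriv le_rfl
  obtain ⟨M₁, hM₁⟩ := hγp.deriv.exists_norm_le hP
  obtain ⟨M₂, hM₂⟩ := hhp.deriv.exists_norm_le hH
  have hM₂0 : 0 ≤ M₂ := (norm_nonneg _).trans (hM₂ 0)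
  obtain ⟨p, hp, hmin⟩ := ((isCompact_Icc (a := (0:ℝ)) (b := 1)).prod
    (isCompact_Icc (a := -(1 / 2 : ℝ)) (b := 1 / 2))).exists_isMinOn
    ⟨(0, 0), by constructor <;> constructor <;> norm_num⟩ (continuous_segMean hP).norm.continuousOn
  set m := ‖segMean (deriv γ) p.1 p.2‖
  have hm : 0 < m := norm_pos_iff.2 (segMean_ne_zero hγ hinj hreg
    (lt_of_le_of_lt (abs_le.2 hp.2) (by norm_num)))
  have hτ₀ : 0 < min 1 (m / (2 * (M₂ + 1))) := lt_min one_pos (by positivity)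
  have hG : ∀ τ : ℝ, |τ| ≤ min 1 (m / (2 * (M₂ + 1))) → ∀ u ∈ Icc (0:ℝ) 1, ∀ w : ℝ,
      |w| ≤ 1 / 2 → m / 2 ≤ ‖segMean (deriv γ + τ • deriv h) u w‖ := fun τ hτ u hu w hw => by
    have h1 : m ≤ ‖segMean (deriv γ) u w‖ := isMinOn_iff.1 hmin (u, w) (mk_mem_prod hu (abs_le.1 hw))
    have h2 : ‖segMean (deriv h) u w‖ ≤ M₂ :=
      (norm_segMean_le_segSpeed _ _ _).trans (segSpeed_le hH hM₂ _ _)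
    have h3 : ‖τ • segMean (deriv h) u w‖ ≤ m / 2 := by
      rw [norm_smul, Real.norm_eq_abs]
      calc |τ| * ‖segMean (deriv h) u w‖ ≤ m / (2 * (M₂ + 1)) * (M₂ + 1) := by
            gcongr
            · exact hτ.trans (min_le_right _ _)
            · linarith
        _ = m / 2 := by field_simp
    rw [segMean_add_smul hP hH]
    have := norm_sub_norm_le (segMean (deriv γ) u w) (-(τ • segMean (deriv h) u w))
    rw [norm_neg, sub_neg_eq_add] at this
    linarith
  refine ⟨m / 2, max M₁ M₂, _, half_pos hm, hτ₀, min_le_left _ _, fun x => (hM₁ x).trans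
    (le_max_left _ _), fun x => (hM₂ x).trans (le_max_right _ _), fun τ hτ x => ?_, hG⟩
  have hper : Function.Periodic (fun x => deriv γ x + τ • deriv h x) 1 := fun x => by
    simp only [hγp.deriv x, hhp.deriv x]
  obtain ⟨y, hy, hxy⟩ := hper.exists_mem_Ico₀ one_pos x
  change deriv γ x + τ • deriv h x = deriv γ y + τ • deriv h y at hxy
  rw [hxy]
  simpa [segMean] using hG τ hτ y (Ico_subset_Icc_self hy) 0 (by norm_num)

lemma PerturbBounds.M_pos {c M τ₀ : ℝ} (hb : PerturbBounds γ h c M τ₀) : 0 < M := by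
  have := hb.le_norm 0 (by simpa using hb.τ₀_pos.le) 0
  simp only [zero_smul, add_zero] at this
  exact hb.c_pos.trans_le (this.trans (hb.norm_left_le 0))

lemma PerturbBounds.norm_le {c M τ₀ : ℝ} (hb : PerturbBounds γ h c M τ₀) {τ : ℝ}
    (hτ : |τ| ≤ τ₀) (x : ℝ) : ‖(deriv γ + τ • deriv h) x‖ ≤ 2 * M :=
  (norm_add_smul_le_add (hτ.trans hb.τ₀_le) _ _).trans
    (by linarith [hb.norm_left_le x, hb.norm_right_le x])

/-- The difference of the squared intrinsic and extrinsic distances, divided by `w²`. -/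
def distDefect (γ : ℝ → Rn n) (u w : ℝ) : ℝ :=
  (idist γ u w / |w|) ^ 2 - ‖segMean (deriv γ) u w‖ ^ 2

lemma distDefect_nonneg (hγ : ContDiff ℝ 1 γ) (hper : Function.Periodic γ 1) {u w : ℝ}
    (hw : |w| ≤ 1) (hw0 : w ≠ 0) : 0 ≤ distDefect γ u w := by
  have h1 := norm_sub_le_idist hγ hper (u := u) hw
  rw [sub_eq_smul_segMean hγ, norm_smul, Real.norm_eq_abs, mul_comm,
    ← le_div_iff₀ (abs_pos.2 hw0)] at h1
  have := pow_le_pow_left₀ (norm_nonneg _) h1 2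
  exact sub_nonneg.2 this

lemma ohIntegrand_eq {α : ℝ} (hγ : ContDiff ℝ 1 γ) {u w : ℝ} (hw0 : w ≠ 0)
    (hi : 0 ≤ idist γ u w) : ohIntegrand α γ u w =
      |w| ^ (-α) * ((‖segMean (deriv γ) u w‖ ^ 2) ^ (-(α / 2)) -
        (‖segMean (deriv γ) u w‖ ^ 2 + distDefect γ u w) ^ (-(α / 2))) *
        (‖deriv γ (u + w)‖ * ‖deriv γ u‖) := by
  have hw : 0 < |w| := abs_pos.2 hw0
  have key : ∀ x : ℝ, 0 ≤ x → 1 / (|w| * x) ^ α = |w| ^ (-α) * (x ^ 2) ^ (-(α / 2)) := fun x hx => by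
    rw [Real.mul_rpow hw.le hx, one_div, mul_inv, ← Real.rpow_neg hw.le, ← Real.rpow_neg hx,
      ← Real.rpow_natCast, ← Real.rpow_mul hx]
    congr 2
    push_cast; ring
  rw [distDefect, add_sub_cancel, mul_sub, ← key _ (norm_nonneg _),
    ← key _ (div_nonneg hi hw.le), mul_div_cancel₀ _ hw.ne', ohIntegrand, sub_eq_smul_segMean hγ,
    norm_smul, Real.norm_eq_abs, mul_assoc]

lemma abs_sq_sub_sq_le {a b C D : ℝ} (ha : |a| ≤ C) (hb : |b| ≤ C) (hab : |a - b| ≤ D) :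
    |a ^ 2 - b ^ 2| ≤ 2 * C * D := by
  rw [sq_sub_sq, abs_mul]
  have h0 := abs_nonneg a
  have : |a + b| ≤ 2 * C := (abs_add_le _ _).trans (by linarith)
  exact mul_le_mul this hab (abs_nonneg _) (by linarith)

lemma exists_distDefect_bound {c M τ₀ : ℝ} (hγ : ContDiff ℝ 1 γ) (hh : ContDiff ℝ 1 h)
    (hb : PerturbBounds γ h c M τ₀) {α : ℝ} (hα : 0 < α) :
    ∃ K : ℝ, 0 ≤ K ∧ ∀ u w : ℝ, w ≠ 0 → |w| ≤ 1 / 2 →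
      (∀ τ : ℝ, |τ| ≤ τ₀ → 0 ≤ idist (γ + τ • h) u w → distDefect (γ + τ • h) u w ≤
        K * (segOsc (deriv γ) u w + segOsc (deriv h) u w + |w| ^ α)) ∧
      ∀ τ₁ τ₂ : ℝ, |τ₁| ≤ τ₀ → |τ₂| ≤ τ₀ → 0 ≤ idist (γ + τ₁ • h) u w →
        0 ≤ idist (γ + τ₂ • h) u w →
        |distDefect (γ + τ₁ • h) u w - distDefect (γ + τ₂ • h) u w| ≤
        K * (segOsc (deriv γ) u w + segOsc (deriv h) u w + |w| ^ α) * |τ₁ - τ₂| := by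
  have hP := hγ.continuous_deriv le_rfl
  have hH := hh.continuous_deriv le_rfl
  have hM := hb.M_pos
  have hc := hb.c_pos
  have hcont : ∀ τ : ℝ, Continuous (deriv γ + τ • deriv h) := fun τ => by fun_prop
  set δ := c / (4 * M) with hδ
  have hδ0 : 0 < δ := by positivity
  set K₁ := 4 * (2 * (1 + 4 * M / c)) with hK₁
  set K₂ := (2 * M) ^ 2 + (2 * (2 * M) * (2 * M / δ) + 2 * (2 * M) * M) with hK₂
  have hK₁0 : 4 ≤ K₁ := by
    have : 0 < 4 * M / c := by positivity
    linarith
  have hK₂0 : 0 ≤ K₂ := by positivity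
  have hspeed : ∀ τ : ℝ, |τ| ≤ τ₀ → ∀ u w, segSpeed (deriv γ + τ • deriv h) u w ≤ 2 * M :=
    fun τ hτ u w => segSpeed_le (hcont τ) (hb.norm_le hτ) u w
  refine ⟨K₁ + K₂ * δ ^ (-α), by positivity, fun u w hw0 hw => ?_⟩
  have hwpos : 0 < |w| := abs_pos.2 hw0
  set o := segOsc (deriv γ) u w + segOsc (deriv h) u w with ho
  have ho0 : 0 ≤ o := add_nonneg (segOsc_nonneg _ _ _) (segOsc_nonneg _ _ _)
  have hwα : 0 ≤ |w| ^ α := by positivity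
  have hδα : 0 ≤ δ ^ (-α) := by positivity
  rcases le_or_gt |w| δ with hnear | hfar
  · have hKo : K₁ * o ≤ (K₁ + K₂ * δ ^ (-α)) * (o + |w| ^ α) := by
      gcongr
      · have : 0 ≤ K₂ * δ ^ (-α) := by positivity
        linarith
      · linarith
    have hd : ∀ τ : ℝ, |τ| ≤ τ₀ → distDefect (γ + τ • h) u w =
        segSpeed (deriv γ + τ • deriv h) u w ^ 2 - ‖segMean (deriv γ + τ • deriv h) u w‖ ^ 2 :=
      fun τ hτ => by
        have hle : |w| * segSpeed (deriv γ + τ • deriv h) u w ≤ c / 2 := by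
          calc |w| * segSpeed (deriv γ + τ • deriv h) u w ≤ δ * (2 * M) :=
                mul_le_mul hnear (hspeed τ hτ u w) (segSpeed_nonneg _ _ _) hδ0.le
            _ = c / 2 := by rw [hδ]; field_simp; norm_num
        have hL : c ≤ segSpeed (deriv γ + τ • deriv h) 0 1 :=
          le_segSpeed (hcont τ) (hb.le_norm τ hτ) 0 1
        rw [distDefect, idist_eq, deriv_add_smul hγ hh, min_eq_left (by linarith),
          mul_div_cancel_left₀ _ hwpos.ne']
    refine ⟨fun τ hτ _ => ?_, fun τ₁ τ₂ h₁ h₂ _ _ => ?_⟩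
    · rw [hd τ hτ]
      refine (sq_segSpeed_sub_sq_norm_segMean_le hP hH (hτ.trans hb.τ₀_le) u w).trans ?_
      refine le_trans ?_ hKo
      gcongr
    · rw [hd τ₁ h₁, hd τ₂ h₂]
      refine (abs_segSpeed_defect_sub_le hP hH hc hb.norm_left_le hb.norm_right_le
        (h₁.trans hb.τ₀_le) (h₂.trans hb.τ₀_le) (hb.le_norm τ₁ h₁) (hb.le_norm τ₂ h₂) u w).trans ?_
      calc _ = K₁ * o * |τ₁ - τ₂| := by rw [hK₁, ho]; ring
        _ ≤ _ := by gcongr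
  · have hKw : K₂ ≤ (K₁ + K₂ * δ ^ (-α)) * (o + |w| ^ α) := by
      have h1 : 1 ≤ δ ^ (-α) * |w| ^ α := by
        rw [Real.rpow_neg hδ0.le, inv_mul_eq_div, le_div_iff₀ (by positivity), one_mul]
        exact Real.rpow_le_rpow hδ0.le hfar.le hα.le
      calc K₂ = K₂ * 1 := by ring
        _ ≤ K₂ * (δ ^ (-α) * |w| ^ α) := by gcongr
        _ = (K₂ * δ ^ (-α)) * |w| ^ α := by ring
        _ ≤ _ := by gcongr <;> linarith
    have hdn : ∀ τ : ℝ, |τ| ≤ τ₀ → idist (γ + τ • h) u w / |w| ≤ 2 * M := fun τ hτ => by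
      rw [div_le_iff₀ hwpos, idist_eq, deriv_add_smul hγ hh, mul_comm (2 * M)]
      exact (min_le_left _ _).trans (by gcongr; exact hspeed τ hτ u w)
    refine ⟨fun τ hτ hi => ?_, fun τ₁ τ₂ h₁ h₂ hi₁ hi₂ => ?_⟩
    · refine le_trans ?_ hKw
      have h1 : (idist (γ + τ • h) u w / |w|) ^ 2 ≤ (2 * M) ^ 2 := by
        gcongr
        exact hdn τ hτ
      rw [distDefect]
      have h2 : 0 ≤ 2 * (2 * M) * (2 * M / δ) + 2 * (2 * M) * M := by positivity
      linarith [sq_nonneg ‖segMean (deriv (γ + τ • h)) u w‖]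
    · have hs := abs_segSpeed_sub_le hP hH hb.norm_right_le τ₁ τ₂
      have hi : |idist (γ + τ₁ • h) u w - idist (γ + τ₂ • h) u w| ≤ 2 * M * |τ₁ - τ₂| := by
        have hsw : |w| * |segSpeed (deriv γ + τ₁ • deriv h) u w -
            segSpeed (deriv γ + τ₂ • deriv h) u w| ≤ M * |τ₁ - τ₂| :=
          (mul_le_mul (hw.trans (by norm_num)) (hs u w) (abs_nonneg _) zero_le_one).trans_eq
            (one_mul _)
        rw [← abs_abs w, ← abs_mul, mul_sub] at hsw
        have hs01 := hs 0 1
        rw [idist_eq, idist_eq, deriv_add_smul hγ hh, deriv_add_smul hγ hh]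
        refine (abs_min_sub_min_le_max _ _ _ _).trans (max_le ?_ ?_)
        · have : 0 ≤ M * |τ₁ - τ₂| := by positivity
          linarith
        · rw [sub_sub_sub_comm]
          refine (abs_sub _ _).trans ?_
          linarith
      have hdiff : |idist (γ + τ₁ • h) u w / |w| - (idist (γ + τ₂ • h) u w / |w|)| ≤
          2 * M / δ * |τ₁ - τ₂| := by
        rw [← sub_div, abs_div, abs_abs]
        calc _ ≤ 2 * M * |τ₁ - τ₂| / δ := by gcongr
          _ = _ := by ring
      have hG : |‖segMean (deriv γ + τ₁ • deriv h) u w‖ -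
          ‖segMean (deriv γ + τ₂ • deriv h) u w‖| ≤ M * |τ₁ - τ₂| := by
        rw [segMean_add_smul hP hH, segMean_add_smul hP hH]
        refine (abs_norm_add_smul_sub_le _ _ _ _).trans ?_
        rw [mul_comm]
        gcongr
        exact (norm_segMean_le_segSpeed _ _ _).trans (segSpeed_le hH hb.norm_right_le _ _)
      have hGle : ∀ τ : ℝ, |τ| ≤ τ₀ → |‖segMean (deriv γ + τ • deriv h) u w‖| ≤ 2 * M :=
        fun τ hτ => by
          rw [abs_norm]
          exact (norm_segMean_le_segSpeed _ _ _).trans (hspeed τ hτ u w)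
      have e1 := abs_sq_sub_sq_le
        ((abs_of_nonneg (div_nonneg hi₁ hwpos.le)).trans_le (hdn τ₁ h₁))
        ((abs_of_nonneg (div_nonneg hi₂ hwpos.le)).trans_le (hdn τ₂ h₂)) hdiff
      have e2 := abs_sq_sub_sq_le (hGle τ₁ h₁) (hGle τ₂ h₂) hG
      rw [distDefect, distDefect, deriv_add_smul hγ hh, deriv_add_smul hγ hh, sub_sub_sub_comm]
      refine (abs_sub _ _).trans ((add_le_add e1 e2).trans ?_)
      calc _ = (K₂ - (2 * M) ^ 2) * |τ₁ - τ₂| := by rw [hK₂]; ring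
        _ ≤ K₂ * |τ₁ - τ₂| := by gcongr; linarith [sq_nonneg (2 * M)]
        _ ≤ _ := by gcongr

end Curves

section Integrand

variable {γ h : ℝ → Rn n}

/-- The majorant of the energy integrand and of its Lipschitz constant in the perturbation
parameter. -/
def energyBound (α : ℝ) (γ h : ℝ → Rn n) (u w : ℝ) : ℝ :=
  (segOsc (deriv γ) u w + segOsc (deriv h) u w + |w| ^ α) * |w| ^ (-α)

lemma ohIntegrand_nonneg {α : ℝ} (hα : 0 ≤ α) {u w : ℝ} (hpos : 0 < ‖γ (u + w) - γ u‖)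
    (hle : ‖γ (u + w) - γ u‖ ≤ idist γ u w) : 0 ≤ ohIntegrand α γ u w := by
  refine mul_nonneg (mul_nonneg (sub_nonneg.2 ?_) (norm_nonneg _)) (norm_nonneg _)
  gcongr

lemma exists_ohIntegrand_bound {c M τ₀ : ℝ} (hγ : ContDiff ℝ 1 γ) (hγp : Function.Periodic γ 1)
    (hh : ContDiff ℝ 1 h) (hhp : Function.Periodic h 1)
    (hb : PerturbBounds γ h c M τ₀) {α : ℝ} (hα : 0 < α) :
    ∃ K : ℝ, 0 ≤ K ∧ ∀ u ∈ Icc (0:ℝ) 1, ∀ w : ℝ, w ≠ 0 → |w| ≤ 1 / 2 →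
      (∀ τ : ℝ, |τ| ≤ τ₀ → 0 ≤ ohIntegrand α (γ + τ • h) u w ∧
        ohIntegrand α (γ + τ • h) u w ≤ K * energyBound α γ h u w) ∧
      ∀ τ₁ τ₂ : ℝ, |τ₁| ≤ τ₀ → |τ₂| ≤ τ₀ →
        |ohIntegrand α (γ + τ₁ • h) u w - ohIntegrand α (γ + τ₂ • h) u w| ≤
        K * energyBound α γ h u w * |τ₁ - τ₂| := by
  have hP := hγ.continuous_deriv le_rfl
  have hH := hh.continuous_deriv le_rfl
  have hM := hb.M_pos
  have hc := hb.c_pos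
  have hτγ : ∀ τ : ℝ, ContDiff ℝ 1 (γ + τ • h) := fun τ => hγ.add (contDiff_const.smul hh)
  have hτp : ∀ τ : ℝ, Function.Periodic (γ + τ • h) 1 := fun τ x => by simp [hγp x, hhp x]
  obtain ⟨K₁, hK₁, hE⟩ := exists_distDefect_bound hγ hh hb hα
  obtain ⟨K₂, hK₂, hψ₁, hψ₂⟩ := exists_rpow_neg_difference_bound (pow_pos hc 2)
    (show 0 < α / 2 by linarith)
  have hspeed : ∀ τ : ℝ, |τ| ≤ τ₀ → ∀ u w, ‖segMean (deriv γ + τ • deriv h) u w‖ ≤ 2 * M :=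
    fun τ hτ u w => (norm_segMean_le_segSpeed _ _ _).trans
      (segSpeed_le (by fun_prop) (hb.norm_le hτ) u w)
  refine ⟨K₂ * K₁ * (4 * M ^ 2 + 2) * (4 * M ^ 2), by positivity, fun u hu w hw0 hw => ?_⟩
  obtain ⟨hE₁, hE₂⟩ := hE u w hw0 hw
  have hw1 : |w| ≤ 1 := hw.trans (by norm_num)
  have hwpos : 0 < |w| := abs_pos.2 hw0
  have hdist : ∀ τ : ℝ, ‖(γ + τ • h) (u + w) - (γ + τ • h) u‖ ≤ idist (γ + τ • h) u w :=
    fun τ => norm_sub_le_idist (hτγ τ) (hτp τ) hw1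
  have hi : ∀ τ : ℝ, 0 ≤ idist (γ + τ • h) u w := fun τ => (norm_nonneg _).trans (hdist τ)
  have he0 : ∀ τ : ℝ, 0 ≤ distDefect (γ + τ • h) u w := fun τ =>
    distDefect_nonneg (hτγ τ) (hτp τ) hw1 hw0
  have hA : ∀ τ : ℝ, |τ| ≤ τ₀ → c ^ 2 ≤ ‖segMean (deriv γ + τ • deriv h) u w‖ ^ 2 :=
    fun τ hτ => pow_le_pow_left₀ hc.le (hb.le_norm_segMean τ hτ u hu w hw) 2
  have hwα : 0 < |w| ^ (-α) := by positivity
  set b := segOsc (deriv γ) u w + segOsc (deriv h) u w + |w| ^ α with hbdef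
  have hb0 : 0 ≤ b := add_nonneg (add_nonneg (segOsc_nonneg _ _ _) (segOsc_nonneg _ _ _))
    (by positivity)
  have hBd : energyBound α γ h u w = b * |w| ^ (-α) := rfl
  have hm0 : ∀ τ : ℝ, 0 ≤ ‖(deriv γ + τ • deriv h) (u + w)‖ * ‖(deriv γ + τ • deriv h) u‖ :=
    fun τ => by positivity
  have hm : ∀ τ : ℝ, |τ| ≤ τ₀ →
      ‖(deriv γ + τ • deriv h) (u + w)‖ * ‖(deriv γ + τ • deriv h) u‖ ≤ 4 * M ^ 2 := fun τ hτ =>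
    (mul_le_mul (hb.norm_le hτ _) (hb.norm_le hτ _) (norm_nonneg _) (by positivity)).trans_eq
      (by ring)
  refine ⟨fun τ hτ => ⟨ohIntegrand_nonneg hα.le ?_ (hdist τ), ?_⟩, fun τ₁ τ₂ h₁ h₂ => ?_⟩
  · rw [sub_eq_smul_segMean (hτγ τ), norm_smul, deriv_add_smul hγ hh]
    exact mul_pos hwpos (hc.trans_le (hb.le_norm_segMean τ hτ u hu w hw))
  · rw [ohIntegrand_eq (hτγ τ) hw0 (hi τ), deriv_add_smul hγ hh, hBd]
    have hψ := (le_abs_self _).trans (hψ₁ _ _ (hA τ hτ) (he0 τ))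
    calc _ ≤ |w| ^ (-α) * (K₂ * (K₁ * b)) * (4 * M ^ 2) := by
          exact mul_le_mul (mul_le_mul_of_nonneg_left (hψ.trans
            (mul_le_mul_of_nonneg_left (hE₁ τ hτ (hi τ)) hK₂)) hwα.le) (hm τ hτ) (hm0 τ)
            (by positivity)
      _ = (K₂ * K₁ * 1 * (4 * M ^ 2)) * (b * |w| ^ (-α)) := by ring
      _ ≤ _ := by
          gcongr
          nlinarith [sq_nonneg M]
  · rw [ohIntegrand_eq (hτγ τ₁) hw0 (hi τ₁), ohIntegrand_eq (hτγ τ₂) hw0 (hi τ₂),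
      deriv_add_smul hγ hh, deriv_add_smul hγ hh, hBd]
    have hG : |‖segMean (deriv γ + τ₁ • deriv h) u w‖ -
        ‖segMean (deriv γ + τ₂ • deriv h) u w‖| ≤ M * |τ₁ - τ₂| := by
      rw [segMean_add_smul hP hH, segMean_add_smul hP hH]
      refine (abs_norm_add_smul_sub_le _ _ _ _).trans ?_
      rw [mul_comm]
      gcongr
      exact (norm_segMean_le_segSpeed _ _ _).trans (segSpeed_le hH hb.norm_right_le _ _)
    have hAd := abs_sq_sub_sq_le ((abs_norm _).trans_le (hspeed τ₁ h₁ u w))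
      ((abs_norm _).trans_le (hspeed τ₂ h₂ u w)) hG
    have ψ₁ := hψ₁ _ _ (hA τ₂ h₂) (he0 τ₂)
    have ψ₂ := hψ₂ _ _ _ _ (hA τ₁ h₁) (hA τ₂ h₂) (he0 τ₁) (he0 τ₂)
    have hmd : |‖(deriv γ + τ₁ • deriv h) (u + w)‖ * ‖(deriv γ + τ₁ • deriv h) u‖ -
        ‖(deriv γ + τ₂ • deriv h) (u + w)‖ * ‖(deriv γ + τ₂ • deriv h) u‖| ≤
        4 * M ^ 2 * |τ₁ - τ₂| := by
      have d : ∀ x, |‖(deriv γ + τ₁ • deriv h) x‖ - ‖(deriv γ + τ₂ • deriv h) x‖| ≤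
          |τ₁ - τ₂| * M := fun x => (abs_norm_add_smul_sub_le _ _ _ _).trans
            (mul_le_mul_of_nonneg_left (hb.norm_right_le x) (abs_nonneg _))
      have e : ∀ a b c d : ℝ, a * b - c * d = (a - c) * b + c * (b - d) := fun _ _ _ _ => by ring
      rw [e]
      refine (abs_add_le _ _).trans ?_
      rw [abs_mul, abs_mul, abs_norm, abs_norm]
      calc _ ≤ |τ₁ - τ₂| * M * (2 * M) + 2 * M * (|τ₁ - τ₂| * M) := by
            gcongr
            · exact d _
            · exact hb.norm_le h₁ _
            · exact hb.norm_le h₂ _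
            · exact d _
        _ = _ := by ring
    have E₁ := hE₁ τ₁ h₁ (hi τ₁)
    have E₂ := hE₁ τ₂ h₂ (hi τ₂)
    have E₁₂ := hE₂ τ₁ τ₂ h₁ h₂ (hi τ₁) (hi τ₂)
    have hm₁ := hm τ₁ h₁
    have m₁0 := hm0 τ₁
    have e10 := he0 τ₁
    set m₁ := ‖(deriv γ + τ₁ • deriv h) (u + w)‖ * ‖(deriv γ + τ₁ • deriv h) u‖
    set m₂ := ‖(deriv γ + τ₂ • deriv h) (u + w)‖ * ‖(deriv γ + τ₂ • deriv h) u‖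
    set A₁ := ‖segMean (deriv γ + τ₁ • deriv h) u w‖ ^ 2
    set A₂ := ‖segMean (deriv γ + τ₂ • deriv h) u w‖ ^ 2
    set e₁ := distDefect (γ + τ₁ • h) u w
    set e₂ := distDefect (γ + τ₂ • h) u w
    set p₁ := A₁ ^ (-(α / 2)) - (A₁ + e₁) ^ (-(α / 2))
    set p₂ := A₂ ^ (-(α / 2)) - (A₂ + e₂) ^ (-(α / 2))
    set t := |τ₁ - τ₂|
    have ht : 0 ≤ t := abs_nonneg _
    have hsplit : |w| ^ (-α) * p₁ * m₁ - |w| ^ (-α) * p₂ * m₂ =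
      |w| ^ (-α) * ((p₁ - p₂) * m₁ + p₂ * (m₁ - m₂)) := by ring
    rw [hsplit, abs_mul, abs_of_pos hwα]
    have hA₁₂ : |A₁ - A₂| ≤ 4 * M ^ 2 * t := hAd.trans_eq (by ring)
    calc |w| ^ (-α) * |(p₁ - p₂) * m₁ + p₂ * (m₁ - m₂)|
        ≤ |w| ^ (-α) * (|p₁ - p₂| * m₁ + |p₂| * |m₁ - m₂|) := by
          gcongr
          refine (abs_add_le _ _).trans_eq ?_
          rw [abs_mul _ m₁, abs_mul p₂, abs_of_nonneg m₁0]
      _ ≤ |w| ^ (-α) * (K₂ * (K₁ * b * (4 * M ^ 2 * t) + K₁ * b * t) * (4 * M ^ 2) +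
          K₂ * (K₁ * b) * (4 * M ^ 2 * t)) := by
          gcongr
          · refine ψ₂.trans ?_
            gcongr
          · exact ψ₁.trans (by gcongr)
      _ = _ := by ring

lemma DifferentiableAt.min_of_ne {f g : ℝ → ℝ} {x : ℝ} (hf : DifferentiableAt ℝ f x)
    (hg : DifferentiableAt ℝ g x) (hne : f x ≠ g x) :
    DifferentiableAt ℝ (fun t => min (f t) (g t)) x := by
  rcases hne.lt_or_gt with hlt | hlt
  · refine hf.congr_of_eventuallyEq ?_
    filter_upwards [hf.continuousAt.eventually_lt hg.continuousAt hlt] with t ht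
    exact min_eq_left ht.le
  · refine hg.congr_of_eventuallyEq ?_
    filter_upwards [hg.continuousAt.eventually_lt hf.continuousAt hlt] with t ht
    exact min_eq_right ht.le

lemma differentiableAt_idist {c M τ₀ : ℝ} (hγ : ContDiff ℝ 1 γ) (hh : ContDiff ℝ 1 h)
    (hb : PerturbBounds γ h c M τ₀) (hreg : RegularCurve γ) {u w : ℝ}
    (hne : arcLen γ u w ≠ curveLen γ - arcLen γ u w) :
    DifferentiableAt ℝ (fun τ : ℝ => idist (γ + τ • h) u w) 0 := by
  have hS : ∀ u w, DifferentiableAt ℝ (fun τ : ℝ => segSpeed (deriv γ + τ • deriv h) u w) 0 :=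
    differentiableAt_segSpeed (hγ.continuous_deriv le_rfl) (hh.continuous_deriv le_rfl) hreg
      hb.norm_right_le
  simp only [idist_eq, deriv_add_smul hγ hh]
  refine DifferentiableAt.min_of_ne ((hS u w).const_mul _)
    ((hS 0 1).sub ((hS u w).const_mul _)) ?_
  simpa [arcLen_eq, curveLen_eq] using hne

/-- `⟨γ'/|γ'|², h'⟩` -/
def logSpeedVar (γ h : ℝ → Rn n) (u : ℝ) : ℝ := ⟪(‖deriv γ u‖ ^ 2)⁻¹ • deriv γ u, deriv h u⟫

/-- The variation of the potential `|γ(u+w) - γ(u)|^{-α} - d_γ(u+w,u)^{-α}`, up to the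
factor `-α`. -/
def potentialVar (α : ℝ) (γ h : ℝ → Rn n) (u w : ℝ) : ℝ :=
  ⟪γ (u + w) - γ u, h (u + w) - h u⟫ / ‖γ (u + w) - γ u‖ ^ (α + 2)
    - deriv (fun τ : ℝ => idist (γ + τ • h) u w) 0 / idist γ u w ^ (α + 1)

lemma HasDerivAt.one_div_rpow {f : ℝ → ℝ} {f' x α : ℝ} (hf : HasDerivAt f f' x)
    (hx : 0 < f x) :
    HasDerivAt (fun t => 1 / f t ^ α) (-α * (f' / f x ^ (α + 1))) x := by
  have h1 : HasDerivAt (fun t => f t ^ (-α)) (f' * -α * f x ^ (-α - 1)) x :=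
    hf.rpow_const (Or.inl hx.ne')
  have h2 : f' * -α * f x ^ (-α - 1) = -α * (f' / f x ^ (α + 1)) := by
    rw [show -α - 1 = -(α + 1) by ring, Real.rpow_neg hx.le]
    ring
  rw [h2] at h1
  refine h1.congr_of_eventuallyEq ?_
  filter_upwards [hf.continuousAt.eventually (lt_mem_nhds hx)] with t ht
  rw [Real.rpow_neg ht.le, one_div]

lemma hasDerivAt_ohIntegrand {α : ℝ} (hγ : ContDiff ℝ 1 γ) (hh : ContDiff ℝ 1 h)
    (hreg : RegularCurve γ) {u w : ℝ} (hne : γ (u + w) - γ u ≠ 0) (hpos : 0 < idist γ u w)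
    (hdiff : DifferentiableAt ℝ (fun τ : ℝ => idist (γ + τ • h) u w) 0) :
    HasDerivAt (fun τ : ℝ => ohIntegrand α (γ + τ • h) u w)
      (ohIntegrand α γ u w * (logSpeedVar γ h (u + w) + logSpeedVar γ h u) -
        α * potentialVar α γ h u w * (‖deriv γ (u + w)‖ * ‖deriv γ u‖)) 0 := by
  have hzero : γ + (0:ℝ) • h = γ := by simp
  have hnorm : HasDerivAt (fun τ : ℝ => ‖(γ + τ • h) (u + w) - (γ + τ • h) u‖)
      (⟪γ (u + w) - γ u, h (u + w) - h u⟫ / ‖γ (u + w) - γ u‖) 0 := by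
    refine (hasDerivAt_norm_add_smul (k := h (u + w) - h u) hne).congr_of_eventuallyEq
      (.of_forall fun τ => ?_)
    simp only [Pi.add_apply, Pi.smul_apply, smul_sub]
    congr 1
    abel
  have hsp : ∀ x, HasDerivAt (fun τ : ℝ => ‖deriv (γ + τ • h) x‖)
      (logSpeedVar γ h x * ‖deriv γ x‖) 0 := fun x => by
    have := hasDerivAt_norm_add_smul (k := deriv h x) (hreg x)
    convert this using 1
    · simp only [deriv_add_smul hγ hh, Pi.add_apply, Pi.smul_apply]
    · have : ‖deriv γ x‖ ≠ 0 := norm_ne_zero_iff.2 (hreg x)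
      rw [logSpeedVar, real_inner_smul_left]
      field_simp
  have h1 := hnorm.one_div_rpow (α := α) (by simpa [sub_eq_zero] using hne)
  have h2 := hdiff.hasDerivAt.one_div_rpow (α := α) (by simpa using hpos)
  have h3 := ((h1.sub h2).mul (hsp (u + w))).mul (hsp u)
  refine h3.congr_deriv ?_
  have hn : 0 < ‖γ (u + w) - γ u‖ := norm_pos_iff.2 hne
  simp only [hzero, Pi.sub_apply, Pi.mul_apply]
  rw [ohIntegrand, potentialVar, show α + 2 = (α + 1) + 1 by ring,
    Real.rpow_add_one hn.ne' (α + 1)]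
  field_simp
  ring

end Integrand

section PairMeasure

/-- Lebesgue measure on `(0, 1] × (-1/2, 1/2)`, the domain of integration of the energy. -/
def pairMeasure : Measure (ℝ × ℝ) :=
  (volume.restrict (Ioc (0:ℝ) 1)).prod (volume.restrict (Ioo (-(1:ℝ)/2) (1/2)))

instance : IsFiniteMeasure pairMeasure := by unfold pairMeasure; infer_instance

lemma ae_pairMeasure_mem :
    ∀ᵐ p ∂pairMeasure, p.1 ∈ Icc (0:ℝ) 1 ∧ p.2 ≠ 0 ∧ |p.2| < 1 / 2 := by
  have h1 : ∀ᵐ u ∂volume.restrict (Ioc (0:ℝ) 1), u ∈ Icc (0:ℝ) 1 :=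
    (ae_restrict_mem measurableSet_Ioc).mono fun u hu => Ioc_subset_Icc_self hu
  have h2 : ∀ᵐ w ∂volume.restrict (Ioo (-(1:ℝ)/2) (1/2)), w ≠ 0 ∧ |w| < 1 / 2 := by
    filter_upwards [ae_restrict_mem measurableSet_Ioo, Measure.ae_ne _ (0:ℝ)] with w hw hw0
    exact ⟨hw0, abs_lt.2 ⟨by linarith [hw.1], hw.2⟩⟩
  filter_upwards [Measure.quasiMeasurePreserving_fst.ae h1,
    Measure.quasiMeasurePreserving_snd.ae h2] with p hp1 hp2 using ⟨hp1, hp2⟩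

lemma lintegral_eq_ofReal_abs_mul_lintegral_comp_mul {g : ℝ → ℝ≥0∞} (hg : Measurable g) {a : ℝ}
    (ha : a ≠ 0) : ∫⁻ z, g z = ENNReal.ofReal |a| * ∫⁻ w, g (a * w) := by
  conv_lhs => rw [← Real.smul_map_volume_mul_left ha]
  rw [lintegral_smul_measure, lintegral_map hg (measurable_const_mul a), smul_eq_mul]

lemma lintegral_dilate_le {P : ℝ → Rn n} (hP : Continuous P) {α : ℝ} (hα : 1 ≤ α) (u : ℝ)
    {x : ℝ} (hx : x ∈ Ioc (0:ℝ) 1) :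
    ∫⁻ w in Ioo (-(1:ℝ)/2) (1/2), ENNReal.ofReal (‖P (u + x * w) - P u‖ ^ 2 * |w| ^ (-α)) ≤
      ∫⁻ w in Ioo (-(1:ℝ)/2) (1/2), ENNReal.ofReal (‖P (u + w) - P u‖ ^ 2 / |w| ^ α) := by
  have hgm : Measurable fun w : ℝ => ENNReal.ofReal (‖P (u + w) - P u‖ ^ 2 / |w| ^ α) := by
    have : Measurable fun w : ℝ => ‖P (u + w) - P u‖ ^ 2 :=
      Continuous.measurable (by fun_prop)
    exact (this.div (measurable_id.norm.pow_const α)).ennreal_ofReal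
  rw [← lintegral_indicator (μ := volume) measurableSet_Ioo
      (f := fun w : ℝ => ENNReal.ofReal (‖P (u + w) - P u‖ ^ 2 / |w| ^ α)),
    lintegral_eq_ofReal_abs_mul_lintegral_comp_mul (hgm.indicator measurableSet_Ioo) hx.1.ne',
    ← lintegral_const_mul' _ _ ENNReal.ofReal_ne_top]
  refine (setLIntegral_mono' measurableSet_Ioo fun w hw => ?_).trans (setLIntegral_le_lintegral _ _)
  have hxw : x * w ∈ Ioo (-(1:ℝ)/2) (1/2) := by
    have : |x * w| < 1 / 2 := by
      rw [abs_mul, abs_of_pos hx.1]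
      exact (mul_le_of_le_one_left (abs_nonneg _) hx.2).trans_lt
        (abs_lt.2 ⟨by linarith [hw.1], hw.2⟩)
    exact ⟨by linarith [(abs_lt.1 this).1], (abs_lt.1 this).2⟩
  rw [indicator_of_mem hxw, abs_of_pos hx.1, ← ENNReal.ofReal_mul hx.1.le]
  refine ENNReal.ofReal_le_ofReal ?_
  have hxα : x ^ α ≤ x := by
    simpa using Real.rpow_le_rpow_of_exponent_ge hx.1 hx.2 hα
  have hxα0 : 0 < x ^ α := Real.rpow_pos_of_pos hx.1 α
  rw [abs_mul, abs_of_pos hx.1, Real.mul_rpow hx.1.le (abs_nonneg w), Real.rpow_neg (abs_nonneg w)]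
  calc _ = x ^ α * (‖P (u + x * w) - P u‖ ^ 2 / (x ^ α * |w| ^ α)) := by field_simp
    _ ≤ _ := by gcongr

lemma ofReal_segOsc_mul {P : ℝ → Rn n} (hP : Continuous P) (u w : ℝ) {c : ℝ} (hc : 0 ≤ c) :
    ENNReal.ofReal (segOsc P u w * c) =
      ∫⁻ x in Ioc (0:ℝ) 1, ENNReal.ofReal (‖P (u + x * w) - P u‖ ^ 2 * c) := by
  rw [segOsc, ← intervalIntegral.integral_mul_const, intervalIntegral.integral_of_le zero_le_one,
    ofReal_integral_eq_lintegral_ofReal]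
  · exact ((Continuous.intervalIntegrable (by fun_prop) 0 1 :
      IntervalIntegrable (fun x => ‖P (u + x * w) - P u‖ ^ 2 * c) volume 0 1)).1
  · exact .of_forall fun x => by positivity

lemma integrable_segOsc_mul {P : ℝ → Rn n} (hP : Continuous P) {α : ℝ} (hα : 1 ≤ α)
    (hfin : gagliardoSq ((α - 1) / 2) P < ⊤) :
    Integrable (fun p : ℝ × ℝ => segOsc P p.1 p.2 * |p.2| ^ (-α)) pairMeasure := by
  have hmeas : Measurable fun p : ℝ × ℝ => segOsc P p.1 p.2 * |p.2| ^ (-α) :=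
    (continuous_segOsc hP).measurable.mul (measurable_snd.norm.pow_const _)
  refine ⟨hmeas.aestronglyMeasurable, ?_⟩
  rw [hasFiniteIntegral_iff_ofReal (.of_forall fun p =>
    mul_nonneg (segOsc_nonneg _ _ _) (by positivity)), pairMeasure,
    lintegral_prod _ hmeas.ennreal_ofReal.aemeasurable]
  refine lt_of_le_of_lt (lintegral_mono fun u => ?_) hfin
  rw [show 1 + 2 * ((α - 1) / 2) = α by ring]
  simp only [fun w : ℝ => ofReal_segOsc_mul hP u w
    (show (0:ℝ) ≤ |w| ^ (-α) by positivity)]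
  rw [lintegral_lintegral_swap]
  · calc _ ≤ ∫⁻ _ in Ioc (0:ℝ) 1, ∫⁻ w in Ioo (-(1:ℝ)/2) (1/2),
          ENNReal.ofReal (‖P (u + w) - P u‖ ^ 2 / |w| ^ α) :=
        setLIntegral_mono' measurableSet_Ioc fun x hx => lintegral_dilate_le hP hα u hx
      _ = _ := by simp
  · have : Measurable fun p : ℝ × ℝ => ‖P (u + p.2 * p.1) - P u‖ ^ 2 :=
      Continuous.measurable (by fun_prop)
    exact (this.mul (measurable_fst.norm.pow_const _)).ennreal_ofReal.aemeasurable

lemma integrable_energyBound {γ h : ℝ → Rn n} (hγ : ContDiff ℝ 1 γ) (hh : ContDiff ℝ 1 h) {α : ℝ}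
    (hα : 1 ≤ α) (hγα : gagliardoSq ((α - 1) / 2) (deriv γ) < ⊤)
    (hhα : gagliardoSq ((α - 1) / 2) (deriv h) < ⊤) :
    Integrable (fun p : ℝ × ℝ => energyBound α γ h p.1 p.2) pairMeasure := by
  have h3 : Integrable (fun p : ℝ × ℝ => |p.2| ^ α * |p.2| ^ (-α)) pairMeasure := by
    refine Integrable.of_bound (C := 1) (Measurable.aestronglyMeasurable
      ((measurable_snd.norm.pow_const _).mul (measurable_snd.norm.pow_const _)))
      (.of_forall fun p => ?_)
    rw [Real.rpow_neg (abs_nonneg _), ← div_eq_mul_inv,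
      Real.norm_of_nonneg (div_nonneg (by positivity) (by positivity))]
    exact div_self_le_one _
  refine (((integrable_segOsc_mul (hγ.continuous_deriv le_rfl) hα hγα).add
    (integrable_segOsc_mul (hh.continuous_deriv le_rfl) hα hhα)).add h3).congr
    (.of_forall fun p => ?_)
  simp only [energyBound, Pi.add_apply]
  ring

lemma strictMono_integral_norm_deriv {γ : ℝ → Rn n} (hγ : ContDiff ℝ 1 γ) (hreg : RegularCurve γ)
    (u : ℝ) : StrictMono fun w => ∫ θ in u..(u + w), ‖deriv γ θ‖ := fun a b hab => by
  have hc := (hγ.continuous_deriv le_rfl).norm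
  have hpos : 0 < ∫ θ in (u + a)..(u + b), ‖deriv γ θ‖ :=
    intervalIntegral.intervalIntegral_pos_of_pos (hc.intervalIntegrable _ _)
      (fun x => norm_pos_iff.2 (hreg x)) (by linarith)
  have := intervalIntegral.integral_add_adjacent_intervals
    (hc.intervalIntegrable (μ := volume) u (u + a)) (hc.intervalIntegrable (u + a) (u + b))
  simp only
  linarith

lemma ae_arcLen_ne {γ : ℝ → Rn n} (hγ : ContDiff ℝ 1 γ) (hreg : RegularCurve γ) :
    ∀ᵐ p ∂pairMeasure, arcLen γ p.1 p.2 ≠ curveLen γ - arcLen γ p.1 p.2 := by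
  have hcont : Continuous fun p : ℝ × ℝ => arcLen γ p.1 p.2 := by
    have := continuous_segSpeed (hγ.continuous_deriv le_rfl)
    simp only [arcLen_eq]
    fun_prop
  have hcl : IsClosed {p : ℝ × ℝ | arcLen γ p.1 p.2 = curveLen γ - arcLen γ p.1 p.2} :=
    isClosed_eq hcont (by fun_prop)
  rw [ae_iff]
  simp only [ne_eq, not_not]
  rw [pairMeasure, Measure.measure_prod_null hcl.measurableSet]
  refine .of_forall fun u => ?_
  refine Set.Countable.measure_zero ?_ _
  have hinj := (strictMono_integral_norm_deriv hγ hreg u).injective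
  refine (((countable_singleton (curveLen γ / 2)).union
    (countable_singleton (-(curveLen γ / 2)))).preimage hinj).mono fun w hw => ?_
  change |_| = curveLen γ - |_| at hw
  have : |∫ θ in u..(u + w), ‖deriv γ θ‖| = curveLen γ / 2 := by linarith
  exact eq_or_eq_neg_of_abs_eq this

end PairMeasure

section FirstVariation

lemma integral_comp_add_neg {X : ℝ → ℝ → ℝ} (hper : ∀ u w, X (u + 1) w = X u w)
    (hX : Integrable (fun p : ℝ × ℝ => X p.1 p.2) pairMeasure)
    (hX' : Integrable (fun p : ℝ × ℝ => X (p.1 + p.2) (-p.2)) pairMeasure) :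
    ∫ p, X (p.1 + p.2) (-p.2) ∂pairMeasure = ∫ p, X p.1 p.2 ∂pairMeasure := by
  rw [pairMeasure] at hX hX' ⊢
  rw [integral_prod_symm _ hX, integral_prod_symm _ hX']
  have inner_eq : ∀ w, ∫ u in Ioc (0:ℝ) 1, X (u + w) (-w) = ∫ u in Ioc (0:ℝ) 1, X u (-w) :=
    fun w => by
      have hp : Function.Periodic (fun u => X u (-w)) 1 := fun u => hper u _
      rw [← intervalIntegral.integral_of_le zero_le_one,
        ← intervalIntegral.integral_of_le zero_le_one,
        intervalIntegral.integral_comp_add_right (fun u => X u (-w)), add_comm 1 w, zero_add]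
      simpa using hp.intervalIntegral_add_eq w 0
  simp only [inner_eq]
  rw [← integral_Ioc_eq_integral_Ioo, ← integral_Ioc_eq_integral_Ioo,
    ← intervalIntegral.integral_of_le (by norm_num), ← intervalIntegral.integral_of_le (by norm_num),
    intervalIntegral.integral_comp_neg (fun w => ∫ u in Ioc (0:ℝ) 1, X u w)]
  norm_num

lemma Ioo_inter_ae_eq_Wset {ε : ℝ} (hε : 0 < ε) :
    (Ioo (-(1:ℝ)/2) (1/2) ∩ {w | ε ≤ |w|} : Set ℝ) =ᵐ[volume] Wset ε := by
  filter_upwards [Measure.ae_ne volume (1/2 : ℝ), Measure.ae_ne volume (-(1:ℝ)/2)] with w h1 h2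
  refine propext ⟨fun ⟨hw, hwε⟩ => ?_, fun hw => ?_⟩
  · rcases le_abs'.1 (show ε ≤ |w| from hwε) with h | h
    · exact Or.inl ⟨hw.1.le, h⟩
    · exact Or.inr ⟨h, hw.2.le⟩
  · rcases hw with hw | hw
    · exact ⟨⟨lt_of_le_of_ne hw.1 h2.symm, by linarith [hw.2]⟩, le_abs'.2 (Or.inl hw.2)⟩
    · exact ⟨⟨by linarith [hw.1], lt_of_le_of_ne hw.2 h1⟩, le_abs'.2 (Or.inr hw.1)⟩

lemma tendsto_integral_Wset {S : ℝ → ℝ → ℝ}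
    (hS : Integrable (fun p : ℝ × ℝ => S p.1 p.2) pairMeasure) :
    Tendsto (fun ε : ℝ => ∫ u in Ioc (0:ℝ) 1, ∫ w in Wset ε, S u w) (𝓝[>] (0:ℝ))
      (𝓝 (∫ p, S p.1 p.2 ∂pairMeasure)) := by
  have hmeas : ∀ ε : ℝ, MeasurableSet {p : ℝ × ℝ | ε ≤ |p.2|} := fun ε =>
    measurableSet_le measurable_const measurable_snd.norm
  have hmeas' : ∀ ε : ℝ, MeasurableSet {w : ℝ | ε ≤ |w|} := fun ε =>
    measurableSet_le measurable_const measurable_id.norm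
  have htrunc : ∀ ε : ℝ, 0 < ε → ∫ u in Ioc (0:ℝ) 1, ∫ w in Wset ε, S u w =
      ∫ p, {p : ℝ × ℝ | ε ≤ |p.2|}.indicator (fun p => S p.1 p.2) p ∂pairMeasure := fun ε hε => by
    have hi := hS.indicator (hmeas ε)
    rw [pairMeasure] at hi ⊢
    rw [integral_prod _ hi]
    refine integral_congr_ae (.of_forall fun u => ?_)
    have : ∀ w, {p : ℝ × ℝ | ε ≤ |p.2|}.indicator (fun p => S p.1 p.2) (u, w) =
        {w : ℝ | ε ≤ |w|}.indicator (S u) w := fun w => rfl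
    simp only [this]
    rw [setIntegral_indicator (hmeas' ε), setIntegral_congr_set (Ioo_inter_ae_eq_Wset hε)]
  refine (tendsto_integral_filter_of_dominated_convergence (fun p : ℝ × ℝ => ‖S p.1 p.2‖)
    (.of_forall fun ε => (hS.indicator (hmeas ε)).aestronglyMeasurable)
    (.of_forall fun ε => .of_forall fun p => norm_indicator_le_norm_self _ _) hS.norm
    ?_).congr' ?_
  · filter_upwards [ae_pairMeasure_mem] with p hp
    refine tendsto_const_nhds.congr' ?_
    filter_upwards [nhdsWithin_le_nhds (Iio_mem_nhds (abs_pos.2 hp.2.1))] with ε hε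
    have hmem : p ∈ {p : ℝ × ℝ | ε ≤ |p.2|} := (mem_Iio.1 hε).le
    exact (indicator_of_mem hmem fun p : ℝ × ℝ => S p.1 p.2).symm
  · filter_upwards [self_mem_nhdsWithin] with ε hε using (htrunc ε hε).symm

variable {γ h : ℝ → Rn n}

lemma measurable_ohIntegrand (hγ : ContDiff ℝ 1 γ) (α : ℝ) :
    Measurable fun p : ℝ × ℝ => ohIntegrand α γ p.1 p.2 := by
  have h1 := (continuous_idist hγ).measurable
  have h2 : Measurable fun p : ℝ × ℝ => ‖γ (p.1 + p.2) - γ p.1‖ :=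
    Continuous.measurable (by have := hγ.continuous; fun_prop)
  have h3 : Measurable fun p : ℝ × ℝ => ‖deriv γ (p.1 + p.2)‖ :=
    Continuous.measurable (by have := hγ.continuous_deriv le_rfl; fun_prop)
  have h4 : Measurable fun p : ℝ × ℝ => ‖deriv γ p.1‖ :=
    Continuous.measurable (by have := hγ.continuous_deriv le_rfl; fun_prop)
  unfold ohIntegrand
  exact ((((h2.pow_const α).const_div 1).sub ((h1.pow_const α).const_div 1)).mul h3).mul h4

lemma oharaER_eq_integral (hγ : ContDiff ℝ 1 γ) {α : ℝ}
    (h0 : ∀ᵐ p ∂pairMeasure, 0 ≤ ohIntegrand α γ p.1 p.2) :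
    oharaER α γ = ∫ p, ohIntegrand α γ p.1 p.2 ∂pairMeasure := by
  have hm := measurable_ohIntegrand hγ α
  rw [integral_eq_lintegral_of_nonneg_ae h0 hm.aestronglyMeasurable, pairMeasure,
    lintegral_prod _ hm.ennreal_ofReal.aemeasurable]
  rfl

/-- The derivative of the energy integrand in the direction `h`. -/
def ohVariation (α : ℝ) (γ h : ℝ → Rn n) (u w : ℝ) : ℝ :=
  ohIntegrand α γ u w * (logSpeedVar γ h (u + w) + logSpeedVar γ h u) -
    α * potentialVar α γ h u w * (‖deriv γ (u + w)‖ * ‖deriv γ u‖)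

lemma hasDirDeriv_oharaER {α : ℝ} (hα : 1 ≤ α) (hγ : MemH1 ((α - 1) / 2) γ)
    (hinj : PerInjective γ) (hreg : RegularCurve γ) (hh : MemH1 ((α - 1) / 2) h) :
    Integrable (fun p : ℝ × ℝ => ohIntegrand α γ p.1 p.2) pairMeasure ∧
    Integrable (fun p : ℝ × ℝ => ohVariation α γ h p.1 p.2) pairMeasure ∧
    HasDirDeriv (oharaER α) γ h (∫ p, ohVariation α γ h p.1 p.2 ∂pairMeasure) := by
  obtain ⟨hγp, hγ, hγα⟩ := hγ
  obtain ⟨hhp, hh, hhα⟩ := hh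
  have hα0 : 0 < α := by linarith
  obtain ⟨c, M, τ₀, hb⟩ := exists_perturbBounds hγ hγp hinj hreg hh hhp
  obtain ⟨K, hK, hbound⟩ := exists_ohIntegrand_bound hγ hγp hh hhp hb hα0
  have hτγ : ∀ τ : ℝ, ContDiff ℝ 1 (γ + τ • h) := fun τ => hγ.add (contDiff_const.smul hh)
  have hEB := (integrable_energyBound hγ hh hα hγα hhα).const_mul K
  have hzero : γ + (0:ℝ) • h = γ := by simp
  have hmeas := fun τ : ℝ => (measurable_ohIntegrand (hτγ τ) α).aestronglyMeasurable
    (μ := pairMeasure)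
  have hnonneg : ∀ τ : ℝ, |τ| ≤ τ₀ →
      ∀ᵐ p ∂pairMeasure, 0 ≤ ohIntegrand α (γ + τ • h) p.1 p.2 := fun τ hτ => by
    filter_upwards [ae_pairMeasure_mem] with p hp
    exact ((hbound p.1 hp.1 p.2 hp.2.1 hp.2.2.le).1 τ hτ).1
  have hint : Integrable (fun p : ℝ × ℝ => ohIntegrand α (γ + (0:ℝ) • h) p.1 p.2) pairMeasure := by
    refine hEB.mono' (hmeas 0) ?_
    filter_upwards [ae_pairMeasure_mem] with p hp
    have := (hbound p.1 hp.1 p.2 hp.2.1 hp.2.2.le).1 0 (by simpa using hb.τ₀_pos.le)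
    rw [Real.norm_of_nonneg this.1]
    exact this.2
  have hdiff : ∀ᵐ p ∂pairMeasure, HasDerivAt (fun τ : ℝ => ohIntegrand α (γ + τ • h) p.1 p.2)
      (ohVariation α γ h p.1 p.2) 0 := by
    filter_upwards [ae_pairMeasure_mem, ae_arcLen_ne hγ hreg] with p hp hne
    have hne0 : γ (p.1 + p.2) - γ p.1 ≠ 0 := by
      rw [sub_eq_smul_segMean hγ]
      exact smul_ne_zero hp.2.1 (segMean_ne_zero hγ hinj hreg (by linarith [hp.2.2]))
    exact hasDerivAt_ohIntegrand hγ hh hreg hne0 ((norm_pos_iff.2 hne0).trans_le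
      (norm_sub_le_idist hγ hγp (by linarith [hp.2.2])))
      (differentiableAt_idist hγ hh hb hreg hne)
  have hvar : AEStronglyMeasurable (fun p : ℝ × ℝ => ohVariation α γ h p.1 p.2) pairMeasure := by
    refine aestronglyMeasurable_of_tendsto_ae (𝓝[≠] (0:ℝ))
      (f := fun τ p => τ⁻¹ • (ohIntegrand α (γ + (0 + τ) • h) p.1 p.2 -
        ohIntegrand α (γ + (0:ℝ) • h) p.1 p.2))
      (fun τ => ((hmeas (0 + τ)).sub (hmeas 0)).const_smul τ⁻¹) ?_
    filter_upwards [hdiff] with p hp using hp.tendsto_slope_zero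
  have hball : Metric.ball (0:ℝ) τ₀ ∈ 𝓝 (0:ℝ) := Metric.ball_mem_nhds _ hb.τ₀_pos
  have hmem : ∀ τ ∈ Metric.ball (0:ℝ) τ₀, |τ| ≤ τ₀ := fun τ hτ => by
    simpa using (mem_ball_zero_iff.1 hτ).le
  obtain ⟨hV, hD⟩ := hasDerivAt_integral_of_dominated_loc_of_lip
    (F := fun (τ : ℝ) (p : ℝ × ℝ) => ohIntegrand α (γ + τ • h) p.1 p.2) (x₀ := (0:ℝ))
    hball (.of_forall hmeas) hint hvar
    (by
      filter_upwards [ae_pairMeasure_mem] with p hp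
      obtain ⟨h1, h2⟩ := hbound p.1 hp.1 p.2 hp.2.1 hp.2.2.le
      refine LipschitzOnWith.of_dist_le_mul fun τ₁ h₁ τ₂ h₂ => ?_
      rw [Real.dist_eq, Real.dist_eq, Real.coe_nnabs]
      exact (h2 τ₁ τ₂ (hmem _ h₁) (hmem _ h₂)).trans
        (mul_le_mul_of_nonneg_right (le_abs_self _) (abs_nonneg _)))
    hEB hdiff
  refine ⟨by simpa only [hzero] using hint, hV, ?_⟩
  have hev : ∀ τ ∈ Metric.ball (0:ℝ) τ₀, oharaER α (γ + τ • h) =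
      ∫ p, ohIntegrand α (γ + τ • h) p.1 p.2 ∂pairMeasure := fun τ hτ =>
    oharaER_eq_integral (hτγ τ) (hnonneg τ (hmem τ hτ))
  have h0 := hev 0 (mem_of_mem_nhds hball)
  refine hD.tendsto_slope_zero.congr' ?_
  filter_upwards [nhdsWithin_le_nhds hball] with τ hτ
  simp only [zero_add]
  rw [← hev τ hτ, ← h0, hzero, smul_eq_mul, inv_mul_eq_div]

/-- The integrand of the first variation, symmetrized in the two endpoints. -/
def symVariation (α : ℝ) (γ h : ℝ → Rn n) (u w : ℝ) : ℝ :=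
  (2 * (1 / ‖γ (u + w) - γ u‖ ^ α - 1 / idist γ u w ^ α) * logSpeedVar γ h u -
    α * potentialVar α γ h u w) * (‖deriv γ (u + w)‖ * ‖deriv γ u‖)

lemma ohIntegrand_add_neg (α : ℝ) (γ : ℝ → Rn n) (u w : ℝ) :
    ohIntegrand α γ (u + w) (-w) = ohIntegrand α γ u w := by
  rw [ohIntegrand, ohIntegrand, idist_add_neg, add_neg_cancel_right, norm_sub_rev]
  ring

lemma ohIntegrand_add_one (hγp : Function.Periodic γ 1) (α u w : ℝ) :
    ohIntegrand α γ (u + 1) w = ohIntegrand α γ u w := by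
  rw [ohIntegrand, ohIntegrand, idist_add_one hγp, add_right_comm, hγp, hγp, hγp.deriv, hγp.deriv]

lemma integral_symVariation (hγ : ContDiff ℝ 1 γ) (hγp : Function.Periodic γ 1)
    (hreg : RegularCurve γ) (hh : ContDiff ℝ 1 h) (hhp : Function.Periodic h 1) {α : ℝ}
    (hE : Integrable (fun p : ℝ × ℝ => ohIntegrand α γ p.1 p.2) pairMeasure)
    (hV : Integrable (fun p : ℝ × ℝ => ohVariation α γ h p.1 p.2) pairMeasure) :
    Integrable (fun p : ℝ × ℝ => symVariation α γ h p.1 p.2) pairMeasure ∧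
    ∫ p, symVariation α γ h p.1 p.2 ∂pairMeasure =
      ∫ p, ohVariation α γ h p.1 p.2 ∂pairMeasure := by
  have hP := hγ.continuous_deriv le_rfl
  have hH := hh.continuous_deriv le_rfl
  have hlc : Continuous (logSpeedVar γ h) := by
    have : ∀ u, ‖deriv γ u‖ ^ 2 ≠ 0 := fun u => pow_ne_zero 2 (norm_ne_zero_iff.2 (hreg u))
    have h1 : Continuous fun u => (‖deriv γ u‖ ^ 2)⁻¹ := (hP.norm.pow 2).inv₀ this
    unfold logSpeedVar
    fun_prop
  have hlp : Function.Periodic (logSpeedVar γ h) 1 := fun u => by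
    simp only [logSpeedVar, hγp.deriv u, hhp.deriv u]
  obtain ⟨C, hC⟩ := hlp.exists_norm_le hlc
  set X : ℝ → ℝ → ℝ := fun u w => ohIntegrand α γ u w * logSpeedVar γ h u with hXdef
  have hX : Integrable (fun p : ℝ × ℝ => X p.1 p.2) pairMeasure :=
    hE.mul_bdd (hlc.comp continuous_fst).aestronglyMeasurable (.of_forall fun p => hC _)
  have hXσ : ∀ u w, X (u + w) (-w) = ohIntegrand α γ u w * logSpeedVar γ h (u + w) :=
    fun u w => by simp only [hXdef, ohIntegrand_add_neg]
  have hX' : Integrable (fun p : ℝ × ℝ => X (p.1 + p.2) (-p.2)) pairMeasure := by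
    simp only [hXσ]
    exact hE.mul_bdd (hlc.comp continuous_add).aestronglyMeasurable (.of_forall fun p => hC _)
  have hperX : ∀ u w, X (u + 1) w = X u w := fun u w => by
    simp only [hXdef, ohIntegrand_add_one hγp, hlp u]
  have hsym : ∀ u w, symVariation α γ h u w =
      ohVariation α γ h u w + (X u w - X (u + w) (-w)) := fun u w => by
    rw [hXσ]
    simp only [hXdef, symVariation, ohVariation, ohIntegrand]
    ring
  simp only [hsym]
  refine ⟨hV.add (hX.sub hX'), ?_⟩
  have hXX' : Integrable (fun p : ℝ × ℝ => X p.1 p.2 - X (p.1 + p.2) (-p.2)) pairMeasure :=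
    hX.sub hX'
  rw [integral_add hV hXX', integral_sub hX hX', integral_comp_add_neg hperX hX hX',
    sub_self, add_zero]

end FirstVariation

/-- For `α ∈ (2,3)`, an injective regular curve `γ ∈ H^{(1+α)/2,2}` and
`h ∈ H^{(1+α)/2,2}`, the first variation `δE^α(γ;h)` is given by the stated principal value
(in particular, that limit exists). -/
theorem statement3 {n : ℕ} (hn : 2 ≤ n) {α : ℝ} (hα : α ∈ Ioo (2:ℝ) 3)
    {γ : ℝ → Rn n} (hγ : MemH1 ((α - 1) / 2) γ) (hinj : PerInjective γ)
    (hreg : RegularCurve γ) {h : ℝ → Rn n} (hh : MemH1 ((α - 1) / 2) h) :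
    ∃ d : ℝ,
      HasDirDeriv (oharaER α) γ h d ∧
      Tendsto (fun ε : ℝ => ∫ u in Ioc (0:ℝ) 1, ∫ w in Wset ε,
          ((2 * (1 / ‖γ (u + w) - γ u‖ ^ α - 1 / idist γ u w ^ α) *
              ⟪(‖deriv γ u‖ ^ 2)⁻¹ • deriv γ u, deriv h u⟫
            - α * (⟪γ (u + w) - γ u, h (u + w) - h u⟫ / ‖γ (u + w) - γ u‖ ^ (α + 2)
                - deriv (fun τ : ℝ => idist (γ + τ • h) u w) 0 / idist γ u w ^ (α + 1)))
            * (‖deriv γ (u + w)‖ * ‖deriv γ u‖)))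
        (𝓝[>] (0:ℝ)) (𝓝 d) := by
  obtain ⟨hE, hV, hD⟩ := hasDirDeriv_oharaER (by linarith [hα.1]) hγ hinj hreg hh
  obtain ⟨hS, hSV⟩ := integral_symVariation hγ.2.1 hγ.1 hreg hh.2.1 hh.1 hE hV
  exact ⟨_, hD, hSV ▸ tendsto_integral_Wset hS⟩

end
end

section
/- Let n ≥ 2 and let γ₀ ∈ C¹(ℝ/ℤ,ℝⁿ) be an injective regular curve. Then there exist an open neighborhood U of γ₀ in C¹(ℝ/ℤ,ℝⁿ), a constant c > 0, and ε₀ > 0 such that for every γ ∈ U and every (u,w) ∈ (ℝ/ℤ) × [−1/2,1/2]: (i) min(|γ(u+w)−γ(u)|, d_γ(u+w,u)) ≥ c·|w|, (ii) |γ'(u)| ≥ c, and (iii) d_γ(u+w,u) = L(γ|_{[u,u+w]}) whenever |w| ≤ ε₀; in particular every γ ∈ U is injective and regular. -/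
open MeasureTheory Filter Set
open scoped RealInnerProductSpace ENNReal Topology

noncomputable section

variable {n : ℕ}

/-- The difference `γ(u+w) - γ(u)` is `w` times the mean of `γ'` over the segment. -/
theorem sub_eq_smul_integral_deriv {γ : ℝ → Rn n} (hC1 : ContDiff ℝ 1 γ) (u w : ℝ) :
    γ (u + w) - γ u = w • ∫ t in (0:ℝ)..1, deriv γ (u + w * t) := by
  rw [intervalIntegral.smul_integral_comp_add_mul]
  simp only [mul_zero, add_zero, mul_one]
  rw [intervalIntegral.integral_deriv_eq_sub
    (fun x _ => (hC1.differentiable one_ne_zero).differentiableAt)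
    ((hC1.continuous_deriv le_rfl).intervalIntegrable _ _)]

theorem periodic_deriv {γ : ℝ → Rn n} (hper : Function.Periodic γ 1) :
    Function.Periodic (deriv γ) 1 := by
  intro u
  rw [← deriv_comp_add_const, hper.funext]

/-- An injective regular closed `C¹` curve is bi-Lipschitz with respect to the distance
on `ℝ/ℤ`, and its speed is bounded above and below. -/
theorem exists_bilipschitz_bounds {γ : ℝ → Rn n}
    (hper : Function.Periodic γ 1) (hC1 : ContDiff ℝ 1 γ)
    (hinj : PerInjective γ) (hreg : RegularCurve γ) :
    ∃ m > (0:ℝ), ∃ M : ℝ, (∀ u w : ℝ, |w| ≤ 1/2 → m * |w| ≤ ‖γ (u + w) - γ u‖) ∧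
      ∀ u : ℝ, m ≤ ‖deriv γ u‖ ∧ ‖deriv γ u‖ ≤ M := by
  have hcont : Continuous (deriv γ) := hC1.continuous_deriv le_rfl
  set g : ℝ × ℝ → Rn n := fun p => ∫ t in (0:ℝ)..1, deriv γ (p.1 + p.2 * t) with hg
  have hgc : Continuous g := by
    apply intervalIntegral.continuous_parametric_intervalIntegral_of_continuous'
    fun_prop
  have hsub : ∀ u w : ℝ, γ (u + w) - γ u = w • g (u, w) := sub_eq_smul_integral_deriv hC1
  have hg0 : ∀ u, g (u, 0) = deriv γ u := fun u => by simp [hg]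
  have hne : ∀ p : ℝ × ℝ, |p.2| ≤ 1/2 → g p ≠ 0 := by
    rintro ⟨u, w⟩ hw h0
    have h1 := hsub u w
    rw [h0, smul_zero, sub_eq_zero] at h1
    obtain ⟨k, hk⟩ := hinj _ _ h1
    have hwk : w = ((-k : ℤ) : ℝ) := by push_cast; linarith
    have hk0 : -k = 0 := by
      rw [← Int.abs_lt_one_iff]
      have : |((-k : ℤ) : ℝ)| < 1 := by rw [← hwk]; exact lt_of_le_of_lt hw (by norm_num)
      exact_mod_cast this
    rw [hk0, Int.cast_zero] at hwk
    subst hwk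
    exact hreg u (by rw [← hg0, h0])
  have hfract : ∀ u w, g (Int.fract u, w) = g (u, w) := by
    intro u w
    simp only [hg]
    congr 1
    ext1 t
    rw [Int.fract, sub_add_eq_add_sub]
    simpa using (periodic_deriv hper).sub_int_mul_eq (x := u + w * t) ⌊u⌋
  have hK : IsCompact (Icc (0:ℝ) 1 ×ˢ Icc (-(1/2):ℝ) (1/2)) := isCompact_Icc.prod isCompact_Icc
  have hmem : ∀ u w : ℝ, |w| ≤ 1/2 →
      (Int.fract u, w) ∈ Icc (0:ℝ) 1 ×ˢ Icc (-(1/2):ℝ) (1/2) := fun u w hw =>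
    ⟨⟨Int.fract_nonneg u, (Int.fract_lt_one u).le⟩, abs_le.mp hw⟩
  obtain ⟨p, hp, hmin⟩ := hK.exists_isMinOn ⟨_, hmem 0 0 (by norm_num)⟩ hgc.norm.continuousOn
  obtain ⟨q, -, hmax⟩ := hK.exists_isMaxOn ⟨_, hmem 0 0 (by norm_num)⟩ hgc.norm.continuousOn
  have hlow : ∀ u w : ℝ, |w| ≤ 1/2 → ‖g p‖ ≤ ‖g (u, w)‖ := fun u w hw => by
    rw [← hfract u]; exact hmin (hmem u w hw)
  have hupp : ∀ u w : ℝ, |w| ≤ 1/2 → ‖g (u, w)‖ ≤ ‖g q‖ := fun u w hw => by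
    rw [← hfract u]; exact hmax (hmem u w hw)
  refine ⟨‖g p‖, norm_pos_iff.mpr (hne p (abs_le.mpr hp.2)), ‖g q‖, fun u w hw => ?_, fun u => ?_⟩
  · rw [hsub, norm_smul, Real.norm_eq_abs, mul_comm]
    exact mul_le_mul_of_nonneg_left (hlow u w hw) (abs_nonneg w)
  · rw [← hg0]
    exact ⟨hlow u 0 (by norm_num), hupp u 0 (by norm_num)⟩

theorem arcLen_add_neg (γ : ℝ → Rn n) (u w : ℝ) : arcLen γ (u + w) (-w) = arcLen γ u w := by
  rw [arcLen, arcLen, intervalIntegral.integral_symm, abs_neg, add_neg_cancel_right]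

theorem arcLen_le {γ : ℝ → Rn n} {M : ℝ} (hM : ∀ u, ‖deriv γ u‖ ≤ M) (u w : ℝ) :
    arcLen γ u w ≤ M * |w| := by
  have := intervalIntegral.norm_integral_le_of_norm_le_const (a := u) (b := u + w) (C := M)
    (f := fun θ => ‖deriv γ θ‖) (fun x _ => by rw [norm_norm]; exact hM x)
  rwa [Real.norm_eq_abs, add_sub_cancel_left] at this

theorem mul_sub_le_integral_norm_deriv {γ : ℝ → Rn n} (hC1 : ContDiff ℝ 1 γ) {c : ℝ}
    (hc : ∀ u, c ≤ ‖deriv γ u‖) {a b : ℝ} (hab : a ≤ b) :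
    c * (b - a) ≤ ∫ θ in a..b, ‖deriv γ θ‖ := by
  have := intervalIntegral.integral_mono_on hab
    (intervalIntegrable_const (μ := volume) (c := c))
    ((hC1.continuous_deriv le_rfl).norm.intervalIntegrable a b) (fun x _ => hc x)
  rwa [intervalIntegral.integral_const, smul_eq_mul, mul_comm] at this

/-- A lower bound on the speed of a closed curve bounds the intrinsic distance from below. -/
theorem mul_abs_le_idist {γ : ℝ → Rn n} (hper : Function.Periodic γ 1) (hC1 : ContDiff ℝ 1 γ)
    {c : ℝ} (hc0 : 0 ≤ c) (hc : ∀ u, c ≤ ‖deriv γ u‖) {u w : ℝ} (hw : |w| ≤ 1/2) :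
    c * |w| ≤ idist γ u w := by
  wlog hw0 : 0 ≤ w generalizing u w
  · have := this (u := u + w) (w := -w) (by rwa [abs_neg]) (by linarith)
    rwa [idist, arcLen_add_neg, abs_neg] at this
  rw [abs_of_nonneg hw0] at hw ⊢
  have h1 := mul_sub_le_integral_norm_deriv hC1 hc (show u ≤ u + w by linarith)
  have h2 := mul_sub_le_integral_norm_deriv hC1 hc (show u + w ≤ u + 1 by linarith)
  have hint : ∀ a b : ℝ, IntervalIntegrable (fun θ => ‖deriv γ θ‖) volume a b := fun a b =>
    (hC1.continuous_deriv le_rfl).norm.intervalIntegrable a b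
  have h3 := intervalIntegral.integral_add_adjacent_intervals (hint u (u + w)) (hint (u + w) (u + 1))
  have hnper : Function.Periodic (fun θ => ‖deriv γ θ‖) 1 := fun x => by
    simp only [periodic_deriv hper x]
  have h4 : curveLen γ = ∫ θ in u..(u + 1), ‖deriv γ θ‖ := by
    simpa [curveLen] using hnper.intervalIntegral_add_eq 0 u
  have h5 : arcLen γ u w = ∫ θ in u..(u + w), ‖deriv γ θ‖ :=
    abs_of_nonneg (intervalIntegral.integral_nonneg (by linarith) fun _ _ => norm_nonneg _)
  rw [idist, h4, h5]
  refine le_min (by linarith) ?_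
  nlinarith

theorem perInjective_of_le {γ : ℝ → Rn n} (hper : Function.Periodic γ 1) {c : ℝ} (hc : 0 < c)
    (h : ∀ u w : ℝ, |w| ≤ 1/2 → c * |w| ≤ ‖γ (u + w) - γ u‖) : PerInjective γ := by
  intro u v huv
  refine ⟨round (v - u), ?_⟩
  have h1 := h u (v - u - round (v - u)) (abs_sub_round _)
  have h2 : γ (u + (v - u - round (v - u))) = γ v := by
    rw [show u + (v - u - round (v - u)) = v - round (v - u) * 1 by ring]
    exact hper.sub_int_mul_eq _
  rw [h2, huv, sub_self, norm_zero] at h1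
  have h3 : |v - u - round (v - u)| = 0 :=
    le_antisymm (by nlinarith) (abs_nonneg _)
  linarith [abs_eq_zero.mp h3]

/-- Around an injective regular `C¹` curve `γ₀` there are a `C¹`-neighborhood,
a constant `c > 0` and `ε₀ > 0` with the stated uniform bi-Lipschitz-type estimates; in
particular every curve in the neighborhood is injective and regular. -/
theorem statement7 {n : ℕ} (hn : 2 ≤ n) {γ₀ : ℝ → Rn n}
    (hper : Function.Periodic γ₀ 1) (hC1 : ContDiff ℝ 1 γ₀)
    (hinj : PerInjective γ₀) (hreg : RegularCurve γ₀) :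
    ∃ r > (0:ℝ), ∃ c > (0:ℝ), ∃ ε₀ > (0:ℝ),
      ∀ γ : ℝ → Rn n, Function.Periodic γ 1 → ContDiff ℝ 1 γ →
        (∀ u : ℝ, ‖γ u - γ₀ u‖ + ‖deriv γ u - deriv γ₀ u‖ < r) →
        (∀ u w : ℝ, |w| ≤ 1/2 →
          (c * |w| ≤ min ‖γ (u + w) - γ u‖ (idist γ u w)) ∧
          c ≤ ‖deriv γ u‖ ∧
          (|w| ≤ ε₀ → idist γ u w = arcLen γ u w)) ∧
        PerInjective γ ∧ RegularCurve γ := by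
  obtain ⟨m, hm, M, hbl, hder⟩ := exists_bilipschitz_bounds hper hC1 hinj hreg
  have hM : 0 < M := hm.trans_le ((hder 0).1.trans (hder 0).2)
  refine ⟨m / 2, by positivity, m / 2, by positivity, m / 2 / (2 * (M + m / 2)), by positivity,
    fun γ hγper hγC1 hclose => ?_⟩
  have hd : ∀ u, ‖deriv γ u - deriv γ₀ u‖ ≤ m / 2 := fun u => by
    linarith [hclose u, norm_nonneg (γ u - γ₀ u)]
  have hlow : ∀ u, m / 2 ≤ ‖deriv γ u‖ := fun u => by
    linarith [hd u, (hder u).1, norm_le_norm_add_norm_sub' (deriv γ₀ u) (deriv γ u),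
      norm_sub_rev (deriv γ u) (deriv γ₀ u)]
  have hupp : ∀ u, ‖deriv γ u‖ ≤ M + m / 2 := fun u => by
    linarith [hd u, (hder u).2, norm_le_norm_add_norm_sub' (deriv γ u) (deriv γ₀ u)]
  have hchord : ∀ u w : ℝ, |w| ≤ 1/2 → m / 2 * |w| ≤ ‖γ (u + w) - γ u‖ := by
    intro u w hw
    have hdγ := hγC1.differentiable one_ne_zero
    have hdγ₀ := hC1.differentiable one_ne_zero
    have h1 := convex_univ.norm_image_sub_le_of_norm_deriv_le (f := γ - γ₀) (C := m / 2)
      (fun x _ => (hdγ x).sub (hdγ₀ x))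
      (fun x _ => by rw [deriv_sub (hdγ x) (hdγ₀ x)]; exact hd x) (mem_univ u) (mem_univ (u + w))
    rw [add_sub_cancel_left, Real.norm_eq_abs, Pi.sub_apply, Pi.sub_apply, sub_sub_sub_comm] at h1
    linarith [hbl u w hw, norm_le_norm_add_norm_sub' (γ₀ (u + w) - γ₀ u) (γ (u + w) - γ u),
      norm_sub_rev (γ (u + w) - γ u) (γ₀ (u + w) - γ₀ u)]
  refine ⟨fun u w hw => ⟨le_min (hchord u w hw) (mul_abs_le_idist hγper hγC1 (by positivity) hlow hw),
    hlow u, fun hwε => min_eq_left ?_⟩, perInjective_of_le hγper (by positivity) hchord,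
    fun u h0 => ?_⟩
  · have h1 := arcLen_le hupp u w
    have h2 : m / 2 ≤ curveLen γ := by
      simpa [curveLen] using mul_sub_le_integral_norm_deriv hγC1 hlow zero_le_one
    rw [le_div_iff₀ (by positivity)] at hwε
    linarith
  · have := hlow u
    rw [h0, norm_zero] at this
    linarith

end
end
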